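/- arXiv:2401.08078 — 3 statements merged into one kernel-verified Lean document; each statement's English description precedes it below -/
import Mathlib

section
/- Let 𝒜 be a weakly idempotent complete exact category. Let S_C be the class of hereditary complete cotorsion pairs (𝒳,𝒴) in 𝒜 whose core ω = 𝒳∩𝒴 is contravariantly finite, and let S_M be the class of weakly projective model structures on 𝒜. Then the maps Φ : (𝒳,𝒴) ↦ (CoFib_ω, Fib_ω, Weq_ω) and Ψ : (CoFib, Fib, Weq) ↦ (𝒞, T𝓕), where 𝒞 is the class of cofibrant objects and T𝓕 the class of trivially fibrant objects, are mutually inverse bijections between S_C and S_M. -/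
open CategoryTheory Limits ZeroObject

universe v u

/-- An exact structure (Quillen exact category) on an additive category `𝒜`:
a class of conflations (kernel-cokernel pairs), closed under isomorphisms,
with identities deflations, deflations closed under composition and stable
under pullback, and inflations stable under pushout. -/
structure ExactStructure (𝒜 : Type u) [Category.{v} 𝒜] [Preadditive 𝒜]
    [HasZeroObject 𝒜] [HasBinaryBiproducts 𝒜] : Type (max u v) where
  conflation : ∀ ⦃X Y Z : 𝒜⦄, (X ⟶ Y) → (Y ⟶ Z) → Prop
  comp_zero : ∀ {X Y Z : 𝒜} {i : X ⟶ Y} {d : Y ⟶ Z}, conflation i d → i ≫ d = 0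
  isKernel : ∀ {X Y Z : 𝒜} {i : X ⟶ Y} {d : Y ⟶ Z} (h : conflation i d),
    Nonempty (IsLimit (KernelFork.ofι i (comp_zero h)))
  isCokernel : ∀ {X Y Z : 𝒜} {i : X ⟶ Y} {d : Y ⟶ Z} (h : conflation i d),
    Nonempty (IsColimit (CokernelCofork.ofπ d (comp_zero h)))
  conflation_iso : ∀ {X Y Z X' Y' Z' : 𝒜} {i : X ⟶ Y} {d : Y ⟶ Z}
    (eX : X ≅ X') (eY : Y ≅ Y') (eZ : Z ≅ Z') {i' : X' ⟶ Y'} {d' : Y' ⟶ Z'},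
    conflation i d → i ≫ eY.hom = eX.hom ≫ i' → d ≫ eZ.hom = eY.hom ≫ d' →
    conflation i' d'
  id_deflation : ∀ X : 𝒜, conflation (0 : (0 : 𝒜) ⟶ X) (𝟙 X)
  deflation_comp : ∀ {X Y Z X' W : 𝒜} {i : X ⟶ Y} {d : Y ⟶ Z} {i' : X' ⟶ Z} {d' : Z ⟶ W},
    conflation i d → conflation i' d' → ∃ (K : 𝒜) (k : K ⟶ Y), conflation k (d ≫ d')
  pullback_deflation : ∀ {X Y Z Z' : 𝒜} {i : X ⟶ Y} {d : Y ⟶ Z},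
    conflation i d → ∀ (f : Z' ⟶ Z),
    ∃ (Y' : 𝒜) (f' : Y' ⟶ Y) (d' : Y' ⟶ Z') (K : 𝒜) (k : K ⟶ Y'),
      IsPullback f' d' d f ∧ conflation k d'
  pushout_inflation : ∀ {X Y Z X' : 𝒜} {i : X ⟶ Y} {d : Y ⟶ Z},
    conflation i d → ∀ (f : X ⟶ X'),
    ∃ (Y' : 𝒜) (f' : Y ⟶ Y') (i' : X' ⟶ Y') (Q : 𝒜) (q : Y' ⟶ Q),
      IsPushout i f f' i' ∧ conflation i' q

variable {𝒜 : Type u} [Category.{v} 𝒜] [Preadditive 𝒜] [HasZeroObject 𝒜]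
  [HasBinaryBiproducts 𝒜]

/-- `f` is an inflation: the first map of some conflation. -/
def IsInflation (E : ExactStructure 𝒜) {X Y : 𝒜} (i : X ⟶ Y) : Prop :=
  ∃ (Z : 𝒜) (d : Y ⟶ Z), E.conflation i d

/-- `f` is a deflation: the second map of some conflation. -/
def IsDeflation (E : ExactStructure 𝒜) {Y Z : 𝒜} (d : Y ⟶ Z) : Prop :=
  ∃ (X : 𝒜) (i : X ⟶ Y), E.conflation i d

/-- `𝒜` is weakly idempotent complete: every split epimorphism is a deflation. -/
def IsWIC (E : ExactStructure 𝒜) : Prop :=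
  ∀ {X Y : 𝒜} (d : X ⟶ Y) (s : Y ⟶ X), s ≫ d = 𝟙 Y → IsDeflation E d

/-- `Ext¹(A,B) = 0`: every conflation `B ⟶ M ⟶ A` splits. -/
def Ext1IsZero (E : ExactStructure 𝒜) (A B : 𝒜) : Prop :=
  ∀ {M : 𝒜} (i : B ⟶ M) (d : M ⟶ A), E.conflation i d → ∃ r : M ⟶ B, i ≫ r = 𝟙 B

/-- `(X, Y)` is a cotorsion pair: each class is the `Ext¹`-orthogonal of the other. -/
def IsCotorsionPair (E : ExactStructure 𝒜) (X Y : Set 𝒜) : Prop :=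
  (∀ A : 𝒜, A ∈ X ↔ ∀ B ∈ Y, Ext1IsZero E A B) ∧
  (∀ B : 𝒜, B ∈ Y ↔ ∀ A ∈ X, Ext1IsZero E A B)

/-- Completeness of a cotorsion pair: every object has approximation sequences. -/
def IsCompleteCP (E : ExactStructure 𝒜) (X Y : Set 𝒜) : Prop :=
  ∀ A : 𝒜,
    (∃ (Y₀ X₀ : 𝒜) (i : Y₀ ⟶ X₀) (d : X₀ ⟶ A), E.conflation i d ∧ X₀ ∈ X ∧ Y₀ ∈ Y) ∧
    (∃ (Y₁ X₁ : 𝒜) (i : A ⟶ Y₁) (d : Y₁ ⟶ X₁), E.conflation i d ∧ X₁ ∈ X ∧ Y₁ ∈ Y)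

/-- Heredity of a cotorsion pair: `X` is closed under kernels of deflations and
`Y` is closed under cokernels of inflations. -/
def IsHereditaryCP (E : ExactStructure 𝒜) (X Y : Set 𝒜) : Prop :=
  (∀ {K A B : 𝒜} (i : K ⟶ A) (d : A ⟶ B), E.conflation i d → A ∈ X → B ∈ X → K ∈ X) ∧
  (∀ {K A B : 𝒜} (i : K ⟶ A) (d : A ⟶ B), E.conflation i d → K ∈ Y → A ∈ Y → B ∈ Y)

/-- `t : W ⟶ B` is a right `ω`-approximation of `B`. -/
def IsRightApprox (ω : Set 𝒜) {W B : 𝒜} (t : W ⟶ B) : Prop :=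
  W ∈ ω ∧ ∀ (W' : 𝒜), W' ∈ ω → ∀ g : W' ⟶ B, ∃ h : W' ⟶ W, h ≫ t = g

/-- `ω` is contravariantly finite: every object has a right `ω`-approximation. -/
def IsContravariantlyFinite (ω : Set 𝒜) : Prop :=
  ∀ B : 𝒜, ∃ (W : 𝒜) (t : W ⟶ B), IsRightApprox ω t

/-- A full additive subcategory closed under isomorphisms and direct summands,
viewed as a class of objects. -/
def AdditivelyClosed (S : Set 𝒜) : Prop :=
  (0 : 𝒜) ∈ S ∧ (∀ A B : 𝒜, A ∈ S → B ∈ S → (A ⊞ B) ∈ S) ∧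
  (∀ {A B : 𝒜}, (A ≅ B) → A ∈ S → B ∈ S) ∧
  (∀ {A B : 𝒜} (i : A ⟶ B) (r : B ⟶ A), i ≫ r = 𝟙 A → B ∈ S → A ∈ S)

/-- `CoFib_ω`: inflations with cokernel in `X`. -/
def CoFibO (E : ExactStructure 𝒜) (X : Set 𝒜) : MorphismProperty 𝒜 :=
  fun _ B f => ∃ (Z : 𝒜) (d : B ⟶ Z), E.conflation f d ∧ Z ∈ X

/-- `Fib_ω`: the `ω`-epic morphisms. -/
def FibO (ω : Set 𝒜) : MorphismProperty 𝒜 :=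
  fun A B f => ∀ (W : 𝒜), W ∈ ω → ∀ g : W ⟶ B, ∃ h : W ⟶ A, h ≫ f = g

/-- `Weq_ω`: morphisms `f : A ⟶ B` such that for some `W ∈ ω` and `t : W ⟶ B`,
`(f,t) : A ⊞ W ⟶ B` is a deflation with kernel in `Y`. -/
def WeqO (E : ExactStructure 𝒜) (ω Y : Set 𝒜) : MorphismProperty 𝒜 :=
  fun A B f => ∃ (W : 𝒜) (_ : W ∈ ω) (t : W ⟶ B) (K : 𝒜) (k : K ⟶ A ⊞ W),
    E.conflation k (biprod.desc f t) ∧ K ∈ Y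

/-- `TCoFib_ω`: split monomorphisms with cokernel in `ω`. -/
def TCoFibO (E : ExactStructure 𝒜) (ω : Set 𝒜) : MorphismProperty 𝒜 :=
  fun A B f => (∃ r : B ⟶ A, f ≫ r = 𝟙 A) ∧
    ∃ (Z : 𝒜) (d : B ⟶ Z), E.conflation f d ∧ Z ∈ ω

/-- `TFib_ω`: deflations with kernel in `Y`. -/
def TFibO (E : ExactStructure 𝒜) (Y : Set 𝒜) : MorphismProperty 𝒜 :=
  fun A _ f => ∃ (K : 𝒜) (k : K ⟶ A), E.conflation k f ∧ K ∈ Y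

/-- `g` is a retract of `f`. -/
def IsRetractMor {A' B' A B : 𝒜} (g : A' ⟶ B') (f : A ⟶ B) : Prop :=
  ∃ (φ₁ : A' ⟶ A) (ψ₁ : A ⟶ A') (φ₂ : B' ⟶ B) (ψ₂ : B ⟶ B'),
    φ₁ ≫ ψ₁ = 𝟙 A' ∧ φ₂ ≫ ψ₂ = 𝟙 B' ∧ φ₁ ≫ f = g ≫ φ₂ ∧ f ≫ ψ₂ = ψ₁ ≫ g

/-- A (closed, Quillen) model structure, given by classes of cofibrations,
fibrations and weak equivalences. -/
structure IsModelStructure (C F W : MorphismProperty 𝒜) : Prop where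
  weq_comp : ∀ {X Y Z : 𝒜} (f : X ⟶ Y) (g : Y ⟶ Z), W f → W g → W (f ≫ g)
  weq_cancel_left : ∀ {X Y Z : 𝒜} (f : X ⟶ Y) (g : Y ⟶ Z), W f → W (f ≫ g) → W g
  weq_cancel_right : ∀ {X Y Z : 𝒜} (f : X ⟶ Y) (g : Y ⟶ Z), W g → W (f ≫ g) → W f
  retract_cofib : ∀ {A' B' A B : 𝒜} (g : A' ⟶ B') (f : A ⟶ B),
    IsRetractMor g f → C f → C g
  retract_fib : ∀ {A' B' A B : 𝒜} (g : A' ⟶ B') (f : A ⟶ B),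
    IsRetractMor g f → F f → F g
  retract_weq : ∀ {A' B' A B : 𝒜} (g : A' ⟶ B') (f : A ⟶ B),
    IsRetractMor g f → W f → W g
  lifting_left : ∀ {A B X Y : 𝒜} (i : A ⟶ B) (p : X ⟶ Y) (a : A ⟶ X) (b : B ⟶ Y),
    C i → W i → F p → a ≫ p = i ≫ b → ∃ s : B ⟶ X, i ≫ s = a ∧ s ≫ p = b
  lifting_right : ∀ {A B X Y : 𝒜} (i : A ⟶ B) (p : X ⟶ Y) (a : A ⟶ X) (b : B ⟶ Y),
    C i → F p → W p → a ≫ p = i ≫ b → ∃ s : B ⟶ X, i ≫ s = a ∧ s ≫ p = b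
  fact_left : ∀ {A B : 𝒜} (f : A ⟶ B), ∃ (Z : 𝒜) (i : A ⟶ Z) (p : Z ⟶ B),
    i ≫ p = f ∧ C i ∧ W i ∧ F p
  fact_right : ∀ {A B : 𝒜} (f : A ⟶ B), ∃ (Z : 𝒜) (j : A ⟶ Z) (q : Z ⟶ B),
    j ≫ q = f ∧ C j ∧ F q ∧ W q

/-- An object is cofibrant if `0 ⟶ X` is a cofibration. -/
def Cofibrant (C : MorphismProperty 𝒜) (A : 𝒜) : Prop := C (0 : (0 : 𝒜) ⟶ A)

/-- An object is fibrant if `X ⟶ 0` is a fibration. -/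
def Fibrant (F : MorphismProperty 𝒜) (A : 𝒜) : Prop := F (0 : A ⟶ (0 : 𝒜))

/-- An object is trivial if `0 ⟶ X` is a weak equivalence. -/
def TrivialObj (W : MorphismProperty 𝒜) (A : 𝒜) : Prop := W (0 : (0 : 𝒜) ⟶ A)

/-- `P` is projective in the exact category. -/
def IsProjObj (E : ExactStructure 𝒜) (P : 𝒜) : Prop :=
  ∀ {A B : 𝒜} (d : A ⟶ B), IsDeflation E d → ∀ g : P ⟶ B, ∃ h : P ⟶ A, h ≫ d = g

/-- The exact category has enough projective objects. -/
def HasEnoughProj (E : ExactStructure 𝒜) : Prop :=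
  ∀ X : 𝒜, ∃ (P : 𝒜) (d : P ⟶ X), IsProjObj E P ∧ IsDeflation E d

/-- Cofibrations are exactly the inflations with cofibrant cokernel. -/
def CofibsAreInflWithCofibCoker (E : ExactStructure 𝒜) (C : MorphismProperty 𝒜) : Prop :=
  ∀ {A B : 𝒜} (f : A ⟶ B),
    C f ↔ ∃ (Z : 𝒜) (d : B ⟶ Z), E.conflation f d ∧ Cofibrant C Z

/-- Fibrations are exactly the deflations with fibrant kernel. -/
def FibsAreDeflWithFibKer (E : ExactStructure 𝒜) (F : MorphismProperty 𝒜) : Prop :=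
  ∀ {A B : 𝒜} (f : A ⟶ B),
    F f ↔ ∃ (K : 𝒜) (k : K ⟶ A), E.conflation k f ∧ Fibrant F K

/-- Trivial fibrations are exactly the deflations with trivially fibrant kernel. -/
def TrivFibsAreDeflWithTrivFibKer (E : ExactStructure 𝒜)
    (F W : MorphismProperty 𝒜) : Prop :=
  ∀ {A B : 𝒜} (f : A ⟶ B),
    (F f ∧ W f) ↔ ∃ (K : 𝒜) (k : K ⟶ A), E.conflation k f ∧ Fibrant F K ∧ TrivialObj W K

/-- Every cofibration is an inflation. -/
def CofibsAreInfl (E : ExactStructure 𝒜) (C : MorphismProperty 𝒜) : Prop :=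
  ∀ {A B : 𝒜} (f : A ⟶ B), C f → IsInflation E f

/-- Every trivial fibration is a deflation. -/
def TrivFibsAreDefl (E : ExactStructure 𝒜) (F W : MorphismProperty 𝒜) : Prop :=
  ∀ {A B : 𝒜} (f : A ⟶ B), F f → W f → IsDeflation E f

/-- An exact model structure in the sense of Gillespie. -/
def IsExactModelStr (E : ExactStructure 𝒜) (C F W : MorphismProperty 𝒜) : Prop :=
  IsModelStructure C F W ∧ CofibsAreInflWithCofibCoker E C ∧ FibsAreDeflWithFibKer E F

/-- A weakly projective model structure: every object is fibrant, cofibrations are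
exactly the inflations with cofibrant cokernel, and trivial fibrations are exactly
the deflations with trivially fibrant kernel. -/
def IsWeaklyProjModelStr (E : ExactStructure 𝒜) (C F W : MorphismProperty 𝒜) : Prop :=
  IsModelStructure C F W ∧ (∀ A : 𝒜, Fibrant F A) ∧
    CofibsAreInflWithCofibCoker E C ∧ TrivFibsAreDeflWithTrivFibKer E F W

/-- A projective model structure: an exact model structure with every object fibrant. -/
def IsProjectiveModelStr (E : ExactStructure 𝒜) (C F W : MorphismProperty 𝒜) : Prop :=
  IsExactModelStr E C F W ∧ (∀ A : 𝒜, Fibrant F A)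

/-- A class of objects is thick: closed under direct summands and two-out-of-three
in conflations. -/
def IsThick (E : ExactStructure 𝒜) (S : Set 𝒜) : Prop :=
  (∀ {A B : 𝒜} (i : A ⟶ B) (r : B ⟶ A), i ≫ r = 𝟙 A → B ∈ S → A ∈ S) ∧
  (∀ {X Y Z : 𝒜} (i : X ⟶ Y) (d : Y ⟶ Z), E.conflation i d →
    ((X ∈ S → Y ∈ S → Z ∈ S) ∧ (X ∈ S → Z ∈ S → Y ∈ S) ∧ (Y ∈ S → Z ∈ S → X ∈ S)))

/-!
For a hereditary complete cotorsion pair `(X, Y)` with contravariantly finite core `ω = X ∩ Y`,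
`Weq_ω` consists of the maps inducing isomorphisms `Hom(Q, -)/ω` for all `Q ∈ X`; this makes
two-out-of-three and closure under retracts formal. The point of the comparison is that an `ω`-epic
stable equivalence is a deflation with kernel in `Y`. Lifting rests on `Ext¹(X, Y) = 0`.

Conversely, when every object is fibrant, trivial cofibrations split, with cokernel in `ω`. So up to
isomorphism a factorization into a trivial cofibration and a fibration is
`A ⟶ A ⊞ V ⟶ B` with `V ∈ ω`, which recovers `Fib_ω` and `Weq_ω`.
-/

section Preadditive

variable {𝒞 : Type*} [Category 𝒞] [Preadditive 𝒞] {P X Y Z : 𝒞}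

lemma isPullback_of_exists_lift {fst : P ⟶ X} {snd : P ⟶ Y} {f : X ⟶ Z} {g : Y ⟶ Z}
    (w : fst ≫ f = snd ≫ g)
    (exists_lift : ∀ {T : 𝒞} (a : T ⟶ X) (b : T ⟶ Y), a ≫ f = b ≫ g →
      ∃ l : T ⟶ P, l ≫ fst = a ∧ l ≫ snd = b)
    (eq_zero : ∀ {T : 𝒞} (l : T ⟶ P), l ≫ fst = 0 → l ≫ snd = 0 → l = 0) :
    IsPullback fst snd f g := by
  choose lift lift_fst lift_snd using @exists_lift
  refine ⟨⟨w⟩, ⟨PullbackCone.IsLimit.mk w (fun s ↦ lift s.fst s.snd s.condition)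
    (fun s ↦ lift_fst _ _ _) (fun s ↦ lift_snd _ _ _) fun s m hfst hsnd ↦ ?_⟩⟩
  refine sub_eq_zero.1 (eq_zero _ ?_ ?_)
  · rw [Preadditive.sub_comp, hfst, lift_fst, sub_self]
  · rw [Preadditive.sub_comp, hsnd, lift_snd, sub_self]

lemma isPushout_of_exists_desc {f : Z ⟶ X} {g : Z ⟶ Y} {inl : X ⟶ P} {inr : Y ⟶ P}
    (w : f ≫ inl = g ≫ inr)
    (exists_desc : ∀ {T : 𝒞} (a : X ⟶ T) (b : Y ⟶ T), f ≫ a = g ≫ b →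
      ∃ l : P ⟶ T, inl ≫ l = a ∧ inr ≫ l = b)
    (eq_zero : ∀ {T : 𝒞} (l : P ⟶ T), inl ≫ l = 0 → inr ≫ l = 0 → l = 0) :
    IsPushout f g inl inr := by
  choose desc inl_desc inr_desc using @exists_desc
  refine ⟨⟨w⟩, ⟨PushoutCocone.IsColimit.mk w (fun s ↦ desc s.inl s.inr s.condition)
    (fun s ↦ inl_desc _ _ _) (fun s ↦ inr_desc _ _ _) fun s m hinl hinr ↦ ?_⟩⟩
  refine sub_eq_zero.1 (eq_zero _ ?_ ?_)
  · rw [Preadditive.comp_sub, hinl, inl_desc, sub_self]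
  · rw [Preadditive.comp_sub, hinr, inr_desc, sub_self]

end Preadditive

variable {E : ExactStructure 𝒜}

/-! ### Conflations -/

namespace ExactStructure.conflation

variable {X Y Z : 𝒜} {i : X ⟶ Y} {d : Y ⟶ Z}

lemma isInflation (h : E.conflation i d) : IsInflation E i := ⟨_, _, h⟩

lemma isDeflation (h : E.conflation i d) : IsDeflation E d := ⟨_, _, h⟩

lemma mono (h : E.conflation i d) : Mono i := by
  obtain ⟨hk⟩ := E.isKernel h
  exact ⟨fun _ _ hab ↦ Fork.IsLimit.hom_ext hk hab⟩

lemma epi (h : E.conflation i d) : Epi d := by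
  obtain ⟨hc⟩ := E.isCokernel h
  exact ⟨fun _ _ hab ↦ Cofork.IsColimit.hom_ext hc hab⟩

lemma eq_zero_of_comp_left (h : E.conflation i d) {T : 𝒜} {t : T ⟶ X} (ht : t ≫ i = 0) :
    t = 0 :=
  have := h.mono
  zero_of_comp_mono i ht

lemma exists_lift (h : E.conflation i d) {T : 𝒜} (t : T ⟶ Y) (ht : t ≫ d = 0) :
    ∃ l : T ⟶ X, l ≫ i = t := by
  obtain ⟨hk⟩ := E.isKernel h
  obtain ⟨l, hl⟩ := KernelFork.IsLimit.lift' hk t ht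
  exact ⟨l, hl⟩

lemma exists_desc (h : E.conflation i d) {T : 𝒜} (t : Y ⟶ T) (ht : i ≫ t = 0) :
    ∃ l : Z ⟶ T, d ≫ l = t := by
  obtain ⟨hc⟩ := E.isCokernel h
  obtain ⟨l, hl⟩ := CokernelCofork.IsColimit.desc' hc t ht
  exact ⟨l, hl⟩

lemma of_mono_of_fac (h : E.conflation i d) {X' : 𝒜} {i' : X' ⟶ Y} [Mono i'] (w : i' ≫ d = 0)
    {l : X ⟶ X'} (hl : l ≫ i' = i) : E.conflation i' d := by
  obtain ⟨l', hl'⟩ := h.exists_lift i' w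
  have := h.mono
  refine E.conflation_iso ⟨l, l', ?_, ?_⟩ (Iso.refl _) (Iso.refl _) h ?_ ?_
  · rw [← cancel_mono i, Category.assoc, hl', hl, Category.id_comp]
  · rw [← cancel_mono i', Category.assoc, hl, hl', Category.id_comp]
  · simpa using hl.symm
  · simp

lemma of_epi_of_fac (h : E.conflation i d) {Z' : 𝒜} {d' : Y ⟶ Z'} [Epi d'] (w : i ≫ d' = 0)
    {l : Z' ⟶ Z} (hl : d' ≫ l = d) : E.conflation i d' := by
  obtain ⟨l', hl'⟩ := h.exists_desc d' w
  have := h.epi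
  refine E.conflation_iso (Iso.refl _) (Iso.refl _) ⟨l', l, ?_, ?_⟩ h ?_ ?_
  · rw [← cancel_epi d, reassoc_of% hl', hl, Category.comp_id]
  · rw [← cancel_epi d', reassoc_of% hl, hl', Category.comp_id]
  · simp
  · simpa using hl'

lemma of_isPullback (h : E.conflation i d) {P Z' : 𝒜} {f' : P ⟶ Y} {d' : P ⟶ Z'} {f : Z' ⟶ Z}
    (hp : IsPullback f' d' d f) : ∃ i' : X ⟶ P, E.conflation i' d' ∧ i' ≫ f' = i := by
  obtain ⟨P₀, f₀, d₀, K, k, hp₀, hk⟩ := E.pullback_deflation h f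
  have w : i ≫ d = (0 : X ⟶ Z') ≫ f := by rw [E.comp_zero h, zero_comp]
  have hk' : E.conflation (k ≫ (hp₀.isoIsPullback _ _ hp).hom) d' :=
    E.conflation_iso (Iso.refl _) (hp₀.isoIsPullback _ _ hp) (Iso.refl _) hk (by simp) (by simp)
  obtain ⟨l, hl⟩ := h.exists_lift ((k ≫ (hp₀.isoIsPullback _ _ hp).hom) ≫ f') (by
    rw [Category.assoc, hp.w, ← Category.assoc, E.comp_zero hk', zero_comp])
  have : Mono (hp.lift i 0 w) :=
    have : Mono (hp.lift i 0 w ≫ f') := by simpa using h.mono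
    mono_of_mono _ f'
  refine ⟨hp.lift i 0 w, hk'.of_mono_of_fac (by simp) (l := l) ?_, by simp⟩
  apply hp.hom_ext
  · rw [Category.assoc, hp.lift_fst, hl]
  · rw [Category.assoc, hp.lift_snd, Limits.comp_zero, E.comp_zero hk']

lemma of_isPushout (h : E.conflation i d) {P X' : 𝒜} {f' : Y ⟶ P} {i' : X' ⟶ P} {f : X ⟶ X'}
    (hp : IsPushout i f f' i') : ∃ d' : P ⟶ Z, E.conflation i' d' ∧ f' ≫ d' = d := by
  obtain ⟨P₀, f₀, i₀, Q, q, hp₀, hq⟩ := E.pushout_inflation h f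
  have w : i ≫ d = f ≫ (0 : X' ⟶ Z) := by rw [E.comp_zero h, Limits.comp_zero]
  have hq' : E.conflation i' ((hp₀.isoIsPushout _ _ hp).inv ≫ q) :=
    E.conflation_iso (Iso.refl _) (hp₀.isoIsPushout _ _ hp) (Iso.refl _) hq (by simp) (by simp)
  obtain ⟨l, hl⟩ := h.exists_desc (f' ≫ (hp₀.isoIsPushout _ _ hp).inv ≫ q) (by
    rw [hp.w_assoc, E.comp_zero hq', Limits.comp_zero])
  have : Epi (hp.desc d 0 w) :=
    have : Epi (f' ≫ hp.desc d 0 w) := by simpa using h.epi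
    epi_of_epi f' _
  refine ⟨hp.desc d 0 w, hq'.of_epi_of_fac (by simp) (l := l) ?_, by simp⟩
  apply hp.hom_ext
  · rw [hp.inl_desc_assoc, hl]
  · rw [hp.inr_desc_assoc, zero_comp, E.comp_zero hq']

lemma exists_pullback (h : E.conflation i d) {Z' : 𝒜} (f : Z' ⟶ Z) :
    ∃ (P : 𝒜) (f' : P ⟶ Y) (d' : P ⟶ Z') (i' : X ⟶ P),
      IsPullback f' d' d f ∧ E.conflation i' d' ∧ i' ≫ f' = i :=
  have ⟨P, f', d', _, _, hp, _⟩ := E.pullback_deflation h f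
  have ⟨i', h', w⟩ := h.of_isPullback hp
  ⟨P, f', d', i', hp, h', w⟩

lemma exists_pushout (h : E.conflation i d) {X' : 𝒜} (f : X ⟶ X') :
    ∃ (P : 𝒜) (f' : Y ⟶ P) (i' : X' ⟶ P) (d' : P ⟶ Z),
      IsPushout i f f' i' ∧ E.conflation i' d' ∧ f' ≫ d' = d :=
  have ⟨P, f', i', _, _, hp, _⟩ := E.pushout_inflation h f
  have ⟨d', h', w⟩ := h.of_isPushout hp
  ⟨P, f', i', d', hp, h', w⟩

lemma exists_section (h : E.conflation i d) {r : Y ⟶ X} (hr : i ≫ r = 𝟙 X) :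
    ∃ s : Z ⟶ Y, s ≫ d = 𝟙 Z ∧ s ≫ r = 0 ∧ r ≫ i + d ≫ s = 𝟙 Y := by
  obtain ⟨s, hs⟩ := h.exists_desc (𝟙 Y - r ≫ i) (by
    rw [Preadditive.comp_sub, reassoc_of% hr, Category.comp_id, sub_self])
  have := h.epi
  refine ⟨s, ?_, ?_, by rw [hs, add_sub_cancel]⟩
  · rw [← cancel_epi d, reassoc_of% hs]
    simp [Preadditive.sub_comp, E.comp_zero h]
  · rw [← cancel_epi d, reassoc_of% hs]
    simp [Preadditive.sub_comp, hr]

lemma exists_retraction (h : E.conflation i d) {s : Z ⟶ Y} (hs : s ≫ d = 𝟙 Z) :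
    ∃ r : Y ⟶ X, i ≫ r = 𝟙 X ∧ s ≫ r = 0 ∧ r ≫ i + d ≫ s = 𝟙 Y := by
  obtain ⟨r, hr⟩ := h.exists_lift (𝟙 Y - d ≫ s) (by
    rw [Preadditive.sub_comp, Category.assoc, hs, Category.comp_id, Category.id_comp, sub_self])
  have := h.mono
  refine ⟨r, ?_, ?_, by rw [hr, sub_add_cancel]⟩
  · rw [← cancel_mono i, Category.assoc, hr]
    simp [Preadditive.comp_sub, reassoc_of% E.comp_zero h]
  · rw [← cancel_mono i, Category.assoc, hr]
    simp [Preadditive.comp_sub, reassoc_of% hs]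

end ExactStructure.conflation

lemma ExactStructure.conflation_inl_snd (E : ExactStructure 𝒜) (A B : 𝒜) :
    E.conflation (biprod.inl : A ⟶ A ⊞ B) (biprod.snd : A ⊞ B ⟶ B) := by
  obtain ⟨d, hd, w⟩ := (E.id_deflation B).of_isPushout (IsPushout.of_has_biproduct A B).flip
  exact hd.of_epi_of_fac biprod.inl_snd (l := 𝟙 B) (by
    rw [Category.comp_id]
    ext
    · rw [biprod.inl_snd, E.comp_zero hd]
    · rw [biprod.inr_snd, w])

lemma ExactStructure.conflation_of_total (E : ExactStructure 𝒜) {A B D : 𝒜} {i : A ⟶ B}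
    {d : B ⟶ D} {r : B ⟶ A} {s : D ⟶ B} (hi : i ≫ r = 𝟙 A) (hs : s ≫ d = 𝟙 D) (w : i ≫ d = 0)
    (total : r ≫ i + d ≫ s = 𝟙 B) : E.conflation i d :=
  have : Mono i := (SplitMono.mk r hi).mono
  have hsr : s ≫ r = 0 := by
    have h := s ≫= total
    rw [Preadditive.comp_add, reassoc_of% hs, Category.comp_id, add_eq_right] at h
    rw [← cancel_mono i, Category.assoc, h, zero_comp]
  E.conflation_iso (Iso.refl A) ⟨biprod.desc i s, biprod.lift r d, by ext <;> simp [*], by simp [*]⟩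
    (Iso.refl D) (E.conflation_inl_snd A D) (by simp) (by ext <;> simp [*])

lemma ExactStructure.conflation_inr_fst (E : ExactStructure 𝒜) (A B : 𝒜) :
    E.conflation (biprod.inr : B ⟶ A ⊞ B) (biprod.fst : A ⊞ B ⟶ A) :=
  E.conflation_of_total biprod.inr_snd biprod.inl_fst biprod.inr_fst
    (by rw [add_comm, biprod.total])

/-! ### Deflations and inflations -/

namespace IsDeflation

lemma comp {A B D : 𝒜} {f : A ⟶ B} {g : B ⟶ D} (hf : IsDeflation E f) (hg : IsDeflation E g) :
    IsDeflation E (f ≫ g) :=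
  have ⟨_, _, hf⟩ := hf
  have ⟨_, _, hg⟩ := hg
  E.deflation_comp hf hg

lemma of_isPullback {P X Y Z : 𝒜} {fst : P ⟶ X} {snd : P ⟶ Y} {f : X ⟶ Z} {g : Y ⟶ Z}
    (hp : IsPullback fst snd f g) (hf : IsDeflation E f) : IsDeflation E snd :=
  have ⟨_, _, hf⟩ := hf
  have ⟨_, h, _⟩ := hf.of_isPullback hp
  h.isDeflation

lemma of_iso {A B : 𝒜} (e : A ≅ B) : IsDeflation E e.hom :=
  ⟨0, 0, E.conflation_iso (Iso.refl 0) (Iso.refl A) e (E.id_deflation A) (by simp) (by simp)⟩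

lemma biprod_map_id {Y Z : 𝒜} {d : Y ⟶ Z} (hd : IsDeflation E d) (B : 𝒜) :
    IsDeflation E (biprod.map d (𝟙 B)) := by
  refine hd.of_isPullback (isPullback_of_exists_lift (fst := biprod.fst) (g := biprod.fst)
    (biprod.map_fst _ _).symm (fun a b hab ↦ ?_) fun l hfst hsnd ↦ ?_)
  · refine ⟨biprod.lift a (b ≫ biprod.snd), biprod.lift_fst _ _, ?_⟩
    ext <;> simp [hab]
  · ext
    · simpa using hfst
    · simpa using hsnd =≫ biprod.snd

lemma biprod_desc {A B D : 𝒜} {d : A ⟶ D} (hd : IsDeflation E d) (f : B ⟶ D) :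
    IsDeflation E (biprod.desc d f) := by
  have h := (hd.biprod_map_id B).comp
    ((of_iso (Biprod.unipotentLower f ≪≫ biprod.braiding D B)).comp
      (E.conflation_inl_snd B D).isDeflation)
  convert! h using 1
  ext <;> simp

lemma snd_comp {A B D : 𝒜} {f : A ⟶ B} {g : B ⟶ D}
    (h : IsDeflation E (biprod.desc (f ≫ g) g)) :
    IsDeflation E ((biprod.snd : A ⊞ B ⟶ B) ≫ g) := by
  convert! (of_iso (Biprod.unipotentUpper (-f))).comp h using 1
  ext <;> simp [Biprod.ofComponents]

end IsDeflation

lemma ExactStructure.conflation.of_snd_comp {A B D K : 𝒜} {g : B ⟶ D} {m : K ⟶ B}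
    (h : IsDeflation E ((biprod.snd : A ⊞ B ⟶ B) ≫ g)) [Mono m] (w : m ≫ g = 0)
    (exists_lift : ∀ {T : 𝒜} (t : T ⟶ B), t ≫ g = 0 → ∃ l, l ≫ m = t) : E.conflation m g := by
  obtain ⟨N, n, hn⟩ := h
  obtain ⟨l, hl⟩ := exists_lift (n ≫ biprod.snd) (by rw [Category.assoc, E.comp_zero hn])
  have hmap : E.conflation (biprod.map (𝟙 A) m) (biprod.snd ≫ g) :=
    hn.of_mono_of_fac (by simp [w]) (l := biprod.lift (n ≫ biprod.fst) l) (by ext <;> simp [hl])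
  -- `m` is a pushout of the kernel of `biprod.snd ≫ g`, hence an inflation.
  have hp : IsPushout (biprod.map (𝟙 A) m) biprod.snd biprod.snd m := by
    refine isPushout_of_exists_desc (biprod.map_snd _ _) (fun a b hab ↦ ?_) fun l hl _ ↦
      zero_of_epi_comp biprod.snd hl
    have hinl := biprod.inl ≫= hab
    have hinr := biprod.inr ≫= hab
    simp only [biprod.inl_map_assoc, Category.id_comp, biprod.inl_snd_assoc, zero_comp] at hinl
    simp only [biprod.inr_map_assoc, biprod.inr_snd_assoc] at hinr
    exact ⟨biprod.inr ≫ a, by ext <;> simp [hinl], hinr⟩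
  obtain ⟨d', hd', hg⟩ := hmap.of_isPushout hp
  rwa [(cancel_epi _).1 hg] at hd'

lemma ExactStructure.conflation.exists_conflation_comp {A B C D Q : 𝒜} {i : A ⟶ B} {d : B ⟶ D}
    {j : B ⟶ C} {e : C ⟶ Q} (hi : E.conflation i d) (hj : E.conflation j e) :
    ∃ (P : 𝒜) (q : C ⟶ P) (j' : D ⟶ P) (e' : P ⟶ Q), E.conflation (i ≫ j) q ∧
      E.conflation j' e' ∧ d ≫ j' = j ≫ q ∧ q ≫ e' = e := by
  obtain ⟨P, q, j', e', hp, hj', hq⟩ := hj.exists_pushout d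
  have hpb : IsPullback biprod.snd (biprod.desc j' q) e e' := by
    refine isPullback_of_exists_lift ?_ (fun a b hab ↦ ?_) fun l hsnd hdesc ↦ ?_
    · ext <;> simp [hq, E.comp_zero hj']
    · obtain ⟨c, hc⟩ := hj'.exists_lift (b - a ≫ q) (by
        rw [Preadditive.sub_comp, Category.assoc, hq, hab, sub_self])
      exact ⟨biprod.lift c a, by simp, by rw [biprod.lift_desc, hc, sub_add_cancel]⟩
    · ext
      · rw [biprod.desc_eq, Preadditive.comp_add, reassoc_of% hsnd, zero_comp, add_zero,
          ← Category.assoc] at hdesc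
        rw [hj'.eq_zero_of_comp_left hdesc, zero_comp]
      · rw [hsnd, zero_comp]
  -- `(j ≫ q, q)` is the composite of `d ⊞ 𝟙` and the pullback `(j', q)` of the deflation `e`.
  have hdesc : IsDeflation E (biprod.desc (j ≫ q) q) := by
    convert! (hi.isDeflation.biprod_map_id C).comp (hj.isDeflation.of_isPullback hpb) using 1
    ext <;> simp [hp.w]
  have := hi.mono
  have := hj.mono
  refine ⟨P, q, j', e', of_snd_comp hdesc.snd_comp ?_ fun t ht ↦ ?_, hj', hp.w.symm, hq⟩
  · rw [Category.assoc, hp.w, reassoc_of% E.comp_zero hi, zero_comp]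
  · obtain ⟨y, rfl⟩ := hj.exists_lift t (by rw [← hq, reassoc_of% ht, zero_comp])
    obtain ⟨z, rfl⟩ := hi.exists_lift y (hj'.eq_zero_of_comp_left (by
      rw [Category.assoc, ← hp.w, ← Category.assoc, ht]))
    exact ⟨z, (Category.assoc _ _ _).symm⟩

lemma IsInflation.comp {A B C : 𝒜} {i : A ⟶ B} {j : B ⟶ C} (hi : IsInflation E i)
    (hj : IsInflation E j) : IsInflation E (i ≫ j) :=
  have ⟨_, _, hi⟩ := hi
  have ⟨_, _, hj⟩ := hj
  have ⟨_, _, _, _, h, _⟩ := hi.exists_conflation_comp hj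
  h.isInflation

lemma IsDeflation.of_comp (hwic : IsWIC E) {A B D : 𝒜} {f : A ⟶ B} {g : B ⟶ D}
    (h : IsDeflation E (f ≫ g)) : IsDeflation E g := by
  obtain ⟨N, k, hk⟩ := (h.biprod_desc g).snd_comp
  obtain ⟨a, ha⟩ := hk.exists_lift biprod.inl (by rw [biprod.inl_snd_assoc, zero_comp])
  obtain ⟨K, m, hm⟩ := hwic (k ≫ biprod.fst) a (by rw [reassoc_of% ha, biprod.inl_fst])
  have hmk : (m ≫ k) ≫ biprod.fst = 0 := by rw [Category.assoc, E.comp_zero hm]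
  have : Mono ((m ≫ k) ≫ biprod.snd) := Preadditive.mono_of_cancel_zero _ fun t ht ↦ by
    have := hk.mono
    refine hm.eq_zero_of_comp_left ((cancel_mono k).1 ?_)
    ext <;> simp_all
  refine ⟨K, (m ≫ k) ≫ biprod.snd, .of_snd_comp (h.biprod_desc g).snd_comp ?_ fun t ht ↦ ?_⟩
  · rw [Category.assoc, Category.assoc, E.comp_zero hk, comp_zero]
  · obtain ⟨n, hn⟩ := hk.exists_lift (t ≫ biprod.inr) (by
      rw [Category.assoc, biprod.inr_snd_assoc, ht])
    obtain ⟨l, rfl⟩ := hm.exists_lift n (by rw [reassoc_of% hn, biprod.inr_fst, comp_zero])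
    exact ⟨l, by simpa using hn =≫ biprod.snd⟩

lemma IsWIC.exists_conflation_of_retract (hwic : IsWIC E) {A B : 𝒜} {s : A ⟶ B} {r : B ⟶ A}
    (hs : s ≫ r = 𝟙 A) :
    ∃ (C : 𝒜) (k : C ⟶ B) (p : B ⟶ C), E.conflation s p ∧ k ≫ p = 𝟙 C := by
  obtain ⟨C, k, hk⟩ := hwic r s hs
  obtain ⟨p, hp, hsp, total⟩ := hk.exists_retraction hs
  exact ⟨C, k, p, E.conflation_of_total hs hp hsp (by rw [add_comm, total]), hp⟩

lemma IsInflation.of_comp_of_retract (hwic : IsWIC E) {A B M : 𝒜} {i : A ⟶ B} {s : B ⟶ M}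
    {r : M ⟶ B} (h : IsInflation E (i ≫ s)) (hs : s ≫ r = 𝟙 B) : IsInflation E i := by
  obtain ⟨Z, q, hq⟩ := h
  obtain ⟨C, k, p, hp, hkp⟩ := hwic.exists_conflation_of_retract hs
  obtain ⟨c, hc⟩ := hq.exists_desc p (by rw [Category.assoc, E.comp_zero hp, comp_zero])
  obtain ⟨D, m, hm⟩ := hwic c (k ≫ q) (by rw [Category.assoc, hc, hkp])
  obtain ⟨e, he⟩ := hm.exists_lift (s ≫ q) (by rw [Category.assoc, hc, E.comp_zero hp])
  have := hp.mono
  have hpb : IsPullback s e q m := by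
    refine isPullback_of_exists_lift he.symm (fun a b hab ↦ ?_) fun l hl _ ↦
      zero_of_comp_mono s hl
    obtain ⟨l, rfl⟩ := hp.exists_lift a (by rw [← hc, reassoc_of% hab, E.comp_zero hm, comp_zero])
    have := hm.mono
    exact ⟨l, rfl, by rw [← cancel_mono m, Category.assoc, he, ← hab, Category.assoc]⟩
  obtain ⟨i', hi', w⟩ := hq.of_isPullback hpb
  rw [(cancel_mono s).1 w] at hi'
  exact hi'.isInflation

/-! ### Vanishing of `Ext¹` -/

lemma ExactStructure.conflation.desc_of_comp {K P B A Z : 𝒜} {k : K ⟶ P} {p : P ⟶ B} {s : A ⟶ P}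
    {z : B ⟶ Z} (hp : E.conflation k p) (hz : E.conflation (s ≫ p) z) :
    E.conflation (biprod.desc k s) (p ≫ z) := by
  obtain ⟨N, n, hn⟩ := hp.isDeflation.comp hz.isDeflation
  obtain ⟨a, ha⟩ := hz.exists_lift (n ≫ p) (by rw [Category.assoc, E.comp_zero hn])
  obtain ⟨b, hb⟩ := hp.exists_lift (n - a ≫ s) (by
    rw [Preadditive.sub_comp, Category.assoc, ha, sub_self])
  have : Mono (biprod.desc k s) := Preadditive.mono_of_cancel_zero _ fun t ht ↦ by
    have hsnd : t ≫ biprod.snd = 0 := hz.eq_zero_of_comp_left (by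
      simpa [biprod.desc_eq, E.comp_zero hp] using ht =≫ p)
    have hfst : t ≫ biprod.fst = 0 := hp.eq_zero_of_comp_left (by
      simpa [biprod.desc_eq, reassoc_of% hsnd] using ht)
    ext <;> simp [hfst, hsnd]
  refine hn.of_mono_of_fac ?_ (l := biprod.lift b a) (by rw [biprod.lift_desc, hb, sub_add_cancel])
  ext
  · simp [reassoc_of% E.comp_zero hp]
  · simpa using E.comp_zero hz

namespace Ext1IsZero

lemma exists_extension {A B Z K : 𝒜} (hE : Ext1IsZero E Z K) {i : A ⟶ B} {z : B ⟶ Z}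
    (hi : E.conflation i z) (a : A ⟶ K) : ∃ b : B ⟶ K, i ≫ b = a := by
  obtain ⟨P, f, j, d, hp, hj, -⟩ := hi.exists_pushout a
  obtain ⟨r, hr⟩ := hE j d hj
  exact ⟨f ≫ r, by rw [hp.w_assoc, hr, Category.comp_id]⟩

lemma exists_lift_of_commSq {A B Z K M N : 𝒜} (hE : Ext1IsZero E Z K) {i : A ⟶ B} {z : B ⟶ Z}
    {k : K ⟶ M} {p : M ⟶ N} (hi : E.conflation i z) (hp : E.conflation k p) {a : A ⟶ M}
    {b : B ⟶ N} (w : a ≫ p = i ≫ b) : ∃ s : B ⟶ M, i ≫ s = a ∧ s ≫ p = b := by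
  obtain ⟨P, b', p', k', hpb, hk', -⟩ := hp.exists_pullback b
  obtain ⟨s₀, hs₀, rfl⟩ : ∃ s₀ : A ⟶ P, s₀ ≫ b' = a ∧ s₀ ≫ p' = i :=
    ⟨hpb.lift a i w, hpb.lift_fst _ _ _, hpb.lift_snd _ _ _⟩
  obtain ⟨r, hr⟩ := hE.exists_extension (hk'.desc_of_comp hi) biprod.fst
  have hkr : k' ≫ r = 𝟙 K := by simpa using biprod.inl ≫= hr
  have hsr : s₀ ≫ r = 0 := by simpa using biprod.inr ≫= hr
  obtain ⟨t, htp, -, total⟩ := hk'.exists_section hkr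
  refine ⟨t ≫ b', ?_, by rw [Category.assoc, hpb.w, reassoc_of% htp]⟩
  have hst : s₀ ≫ p' ≫ t = s₀ := by
    simpa [Preadditive.comp_add, reassoc_of% hsr] using s₀ ≫= total
  rw [Category.assoc, reassoc_of% hst, hs₀]

lemma exists_lift {Z K M N : 𝒜} (hE : Ext1IsZero E Z K) {k : K ⟶ M} {p : M ⟶ N}
    (hp : E.conflation k p) (b : Z ⟶ N) : ∃ s : Z ⟶ M, s ≫ p = b :=
  have ⟨s, _, hs⟩ := hE.exists_lift_of_commSq (E.id_deflation Z) hp (a := 0) (b := b) (by simp)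
  ⟨s, hs⟩

end Ext1IsZero

/-! ### Cotorsion pairs -/

namespace IsCotorsionPair

variable {X Y : Set 𝒜}

lemma exists_extension (hc : IsCotorsionPair E X Y) {A B Q K : 𝒜} (hQ : Q ∈ X) (hK : K ∈ Y)
    {i : A ⟶ B} {d : B ⟶ Q} (h : E.conflation i d) (a : A ⟶ K) : ∃ b : B ⟶ K, i ≫ b = a :=
  Ext1IsZero.exists_extension ((hc.1 Q).1 hQ K hK) h a

lemma exists_lift_of_commSq (hc : IsCotorsionPair E X Y) {A B Q K M N : 𝒜} (hQ : Q ∈ X)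
    (hK : K ∈ Y) {i : A ⟶ B} {d : B ⟶ Q} {k : K ⟶ M} {p : M ⟶ N} (hi : E.conflation i d)
    (hp : E.conflation k p) {a : A ⟶ M} {b : B ⟶ N} (w : a ≫ p = i ≫ b) :
    ∃ s : B ⟶ M, i ≫ s = a ∧ s ≫ p = b :=
  Ext1IsZero.exists_lift_of_commSq ((hc.1 Q).1 hQ K hK) hi hp w

lemma exists_lift (hc : IsCotorsionPair E X Y) {Q K M N : 𝒜} (hQ : Q ∈ X) (hK : K ∈ Y)
    {k : K ⟶ M} {p : M ⟶ N} (h : E.conflation k p) (b : Q ⟶ N) : ∃ s : Q ⟶ M, s ≫ p = b :=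
  Ext1IsZero.exists_lift ((hc.1 Q).1 hQ K hK) h b

lemma mem_left_of_exists_section (hc : IsCotorsionPair E X Y) {A : 𝒜}
    (h : ∀ {K M : 𝒜} (k : K ⟶ M) (d : M ⟶ A), E.conflation k d → K ∈ Y →
      ∃ s : A ⟶ M, s ≫ d = 𝟙 A) : A ∈ X :=
  (hc.1 A).2 fun _ hK _ k d hd ↦
    have ⟨_, hs⟩ := h k d hd hK
    have ⟨r, hr, _⟩ := hd.exists_retraction hs
    ⟨r, hr⟩

lemma mem_left_of_retract (hc : IsCotorsionPair E X Y) {A B : 𝒜} {i : A ⟶ B} {r : B ⟶ A}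
    (hir : i ≫ r = 𝟙 A) (hB : B ∈ X) : A ∈ X := by
  refine hc.mem_left_of_exists_section fun k d hd hK ↦ ?_
  obtain ⟨t, ht⟩ := hc.exists_lift hB hK hd r
  exact ⟨i ≫ t, by rw [Category.assoc, ht, hir]⟩

lemma mem_right_of_retract (hc : IsCotorsionPair E X Y) {A B : 𝒜} {i : A ⟶ B} {r : B ⟶ A}
    (hir : i ≫ r = 𝟙 A) (hB : B ∈ Y) : A ∈ Y := by
  refine (hc.2 A).2 fun Q hQ M k d hd ↦ ?_
  obtain ⟨t, ht⟩ := hc.exists_extension hQ hB hd i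
  exact ⟨t ≫ r, by rw [reassoc_of% ht, hir]⟩

lemma mem_left_of_conflation (hc : IsCotorsionPair E X Y) {A B Z : 𝒜} {i : A ⟶ B} {z : B ⟶ Z}
    (h : E.conflation i z) (hA : A ∈ X) (hZ : Z ∈ X) : B ∈ X := by
  refine hc.mem_left_of_exists_section fun k d hd hK ↦ ?_
  obtain ⟨a, ha⟩ := hc.exists_lift hA hK hd i
  obtain ⟨s, -, hs⟩ := hc.exists_lift_of_commSq hZ hK h hd (a := a) (b := 𝟙 B)
    (by rw [ha, Category.comp_id])
  exact ⟨s, hs⟩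

lemma isHereditaryCP_of_right (hc : IsCotorsionPair E X Y) (hcomp : IsCompleteCP E X Y)
    (hY : ∀ {K A B : 𝒜} (i : K ⟶ A) (d : A ⟶ B), E.conflation i d → K ∈ Y → A ∈ Y → B ∈ Y) :
    IsHereditaryCP E X Y := by
  refine ⟨fun {K A B} κ δ h hA hB ↦ hc.mem_left_of_exists_section fun {L M} ι π hM hL ↦ ?_, hY⟩
  -- Embedding `M` into `N ∈ Y` gives `L ⟶ N ⟶ P` with `P ∈ Y`: a map `K ⟶ P` extends to `A`
  -- since `B ∈ X`, and then lifts to `N` since `A ∈ X`.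
  obtain ⟨N, Q, m, n, hmn, -, hN⟩ := (hcomp M).2
  obtain ⟨P, q, j, e, hq, hje, hj, he⟩ := hM.exists_conflation_comp hmn
  obtain ⟨a, ha⟩ := hc.exists_extension hB (hY _ _ hq hL hN) h j
  obtain ⟨t, ht⟩ := hc.exists_lift hA hL hq a
  obtain ⟨s, hs⟩ := hmn.exists_lift (κ ≫ t) (by
    rw [← he, Category.assoc, reassoc_of% ht, reassoc_of% ha, E.comp_zero hje])
  have := hje.mono
  exact ⟨s, by rw [← cancel_mono j, Category.assoc, hj, reassoc_of% hs, ht, ha, Category.id_comp]⟩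

lemma exists_conflation_core (hc : IsCotorsionPair E X Y) (hcomp : IsCompleteCP E X Y) {Q : 𝒜}
    (hQ : Q ∈ X) :
    ∃ (V Q' : 𝒜) (i : Q ⟶ V) (d : V ⟶ Q'), E.conflation i d ∧ Q' ∈ X ∧ V ∈ X ∩ Y :=
  have ⟨V, Q', i, d, h, hQ', hV⟩ := (hcomp Q).2
  ⟨V, Q', i, d, h, hQ', hc.mem_left_of_conflation h hQ hQ', hV⟩

end IsCotorsionPair

/-! ### Stable equivalences -/

section Stable

variable {𝒞 : Type*} [Category.{v} 𝒞] [Preadditive 𝒞]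

/-- The group of stably null maps `Q ⟶ A`: finite sums of maps factoring through objects of `ω`.
Taking sums spares the assumption that `ω` is closed under biproducts. -/
def stablyNull (ω : Set 𝒞) (Q A : 𝒞) : AddSubgroup (Q ⟶ A) :=
  AddSubgroup.closure {g | ∃ V ∈ ω, ∃ (a : Q ⟶ V) (b : V ⟶ A), a ≫ b = g}

variable {ω : Set 𝒞} {Q A B : 𝒞}

lemma comp_mem_stablyNull {V : 𝒞} (hV : V ∈ ω) (a : Q ⟶ V) (b : V ⟶ A) :
    a ≫ b ∈ stablyNull ω Q A :=
  AddSubgroup.subset_closure ⟨V, hV, a, b, rfl⟩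

lemma stablyNull_le {S : AddSubgroup (Q ⟶ A)}
    (h : ∀ V ∈ ω, ∀ (a : Q ⟶ V) (b : V ⟶ A), a ≫ b ∈ S) : stablyNull ω Q A ≤ S :=
  (AddSubgroup.closure_le _).2 fun _ ⟨V, hV, a, b, hab⟩ ↦ hab ▸ h V hV a b

lemma stablyNull_le_comap (f : A ⟶ B) :
    stablyNull ω Q A ≤ (stablyNull ω Q B).comap (Preadditive.rightComp Q f) :=
  stablyNull_le fun _ hV a b ↦ by
    change (a ≫ b) ≫ f ∈ stablyNull ω Q B
    simpa only [Category.assoc] using comp_mem_stablyNull hV a (b ≫ f)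

/-- The functor sending `A` to the group of maps `Q ⟶ A` modulo stably null maps. -/
def stableHom (ω : Set 𝒞) (Q : 𝒞) : 𝒞 ⥤ AddCommGrpCat.{v} where
  obj A := .of ((Q ⟶ A) ⧸ stablyNull ω Q A)
  map f := AddCommGrpCat.ofHom (QuotientAddGroup.map _ _ _ (stablyNull_le_comap f))
  map_id A := by
    ext g
    exact congrArg _ (Category.comp_id g)
  map_comp f g := by
    ext h
    exact congrArg _ (Category.assoc h f g).symm

/-- The maps inducing isomorphisms on stable maps out of every object of `X`. They are set up as an
inverse image of isomorphisms, which makes two-out-of-three and closure under retracts formal. -/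
def stableEquivalences (X ω : Set 𝒞) : MorphismProperty 𝒞 :=
  (MorphismProperty.isomorphisms _).inverseImage (Functor.pi' fun Q : X ↦ stableHom ω (Q : 𝒞))

instance (X ω : Set 𝒞) : (stableEquivalences X ω).HasTwoOutOfThreeProperty :=
  inferInstanceAs (MorphismProperty.inverseImage _ _).HasTwoOutOfThreeProperty

instance (X ω : Set 𝒞) : (stableEquivalences X ω).IsStableUnderRetracts :=
  inferInstanceAs (MorphismProperty.inverseImage _ _).IsStableUnderRetracts

lemma stableEquivalences_iff {X : Set 𝒞} {f : A ⟶ B} :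
    stableEquivalences X ω f ↔ ∀ Q ∈ X,
      (∀ g : Q ⟶ B, ∃ h : Q ⟶ A, g - h ≫ f ∈ stablyNull ω Q B) ∧
        ∀ h : Q ⟶ A, h ≫ f ∈ stablyNull ω Q B → h ∈ stablyNull ω Q A := by
  change IsIso _ ↔ _
  rw [isIso_pi_iff]
  simp only [Subtype.forall]
  refine forall₂_congr fun Q hQ ↦ ?_
  rw [ConcreteCategory.isIso_iff_bijective]
  change Function.Bijective (QuotientAddGroup.map _ _ _ (stablyNull_le_comap f)) ↔ _
  rw [Function.Bijective, and_comm, injective_iff_map_eq_zero, Function.Surjective]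
  simp only [QuotientAddGroup.mk_surjective.forall, QuotientAddGroup.mk_surjective.exists,
    QuotientAddGroup.map_mk, QuotientAddGroup.eq, QuotientAddGroup.eq_zero_iff, neg_add_eq_sub]
  rfl

lemma stableEquivalences_inl [HasBinaryBiproducts 𝒞] {X : Set 𝒞} {V : 𝒞} (hV : V ∈ ω) (A : 𝒞) :
    stableEquivalences X ω (biprod.inl : A ⟶ A ⊞ V) := by
  refine stableEquivalences_iff.2 fun Q _ ↦ ⟨fun g ↦ ⟨g ≫ biprod.fst, ?_⟩, fun h hh ↦ ?_⟩
  · have hg : g - (g ≫ biprod.fst) ≫ biprod.inl = (g ≫ biprod.snd) ≫ biprod.inr := by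
      ext <;> simp
    exact hg ▸ comp_mem_stablyNull hV _ _
  · have hfst : (h ≫ biprod.inl) ≫ biprod.fst ∈ stablyNull ω Q A :=
      stablyNull_le_comap biprod.fst hh
    simpa using hfst

namespace FibO

variable {p : A ⟶ B}

lemma exists_lift_of_mem_stablyNull (hp : FibO ω p) {g : Q ⟶ B} (hg : g ∈ stablyNull ω Q B) :
    ∃ h : Q ⟶ A, h ≫ p = g :=
  stablyNull_le (S := (Preadditive.rightComp Q p).range) (fun V hV a b ↦
    have ⟨b', hb'⟩ := hp V hV b
    ⟨a ≫ b', (Category.assoc _ _ _).trans (congrArg _ hb')⟩) hg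

lemma exists_lift {X : Set 𝒞} (hp : FibO ω p) (hw : stableEquivalences X ω p) (hQ : Q ∈ X)
    (g : Q ⟶ B) : ∃ h : Q ⟶ A, h ≫ p = g := by
  obtain ⟨h, hh⟩ := (stableEquivalences_iff.1 hw Q hQ).1 g
  obtain ⟨h', hh'⟩ := hp.exists_lift_of_mem_stablyNull hh
  exact ⟨h + h', by rw [Preadditive.add_comp, hh', add_sub_cancel]⟩

lemma biprod_desc [HasBinaryBiproducts 𝒞] {V : 𝒞} {t : V ⟶ B} (ht : IsRightApprox ω t) (f : A ⟶ B) :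
    FibO ω (biprod.desc f t) := fun V' hV' g ↦
  have ⟨h, hh⟩ := ht.2 V' hV' g
  ⟨h ≫ biprod.inr, by rw [Category.assoc, biprod.inr_desc, hh]⟩

omit [Preadditive 𝒞] in
lemma of_retract {A' B' : 𝒞} {p' : A' ⟶ B'} (h : IsRetractMor p' p) (hp : FibO ω p) :
    FibO ω p' := by
  obtain ⟨φ₁, ψ₁, φ₂, ψ₂, -, hφψ, -, w⟩ := h
  intro V hV g
  obtain ⟨l, hl⟩ := hp V hV (g ≫ φ₂)
  exact ⟨l ≫ ψ₁, by rw [Category.assoc, ← w, reassoc_of% hl, hφψ, Category.comp_id]⟩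

end FibO

end Stable

namespace IsCotorsionPair

variable {X Y : Set 𝒜}

lemma mem_stablyNull (hc : IsCotorsionPair E X Y) (hcomp : IsCompleteCP E X Y) {Q K : 𝒜}
    (hQ : Q ∈ X) (hK : K ∈ Y) (g : Q ⟶ K) : g ∈ stablyNull (X ∩ Y) Q K := by
  obtain ⟨V, Q', i, d, h, hQ', hV⟩ := hc.exists_conflation_core hcomp hQ
  obtain ⟨b, rfl⟩ := hc.exists_extension hQ' hK h g
  exact comp_mem_stablyNull hV i b

lemma fibO_of_tFibO (hc : IsCotorsionPair E X Y) {A B : 𝒜} {p : A ⟶ B} (hp : TFibO E Y p) :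
    FibO (X ∩ Y) p := fun _ hV g ↦
  have ⟨_, _, hk, hK⟩ := hp
  hc.exists_lift hV.1 hK hk g

lemma stableEquivalences_of_tFibO (hc : IsCotorsionPair E X Y) (hcomp : IsCompleteCP E X Y)
    {A B : 𝒜} {p : A ⟶ B} (hp : TFibO E Y p) : stableEquivalences X (X ∩ Y) p := by
  obtain ⟨K, k, hk, hK⟩ := hp
  refine stableEquivalences_iff.2 fun Q hQ ↦ ⟨fun g ↦ ?_, fun h hh ↦ ?_⟩
  · obtain ⟨l, rfl⟩ := hc.exists_lift hQ hK hk g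
    exact ⟨l, by rw [sub_self]; exact zero_mem _⟩
  · have hle : stablyNull (X ∩ Y) Q B ≤
        (stablyNull (X ∩ Y) Q A).map (Preadditive.rightComp Q p) :=
      stablyNull_le fun V hV a b ↦
        have ⟨b', hb'⟩ := hc.exists_lift hV.1 hK hk b
        ⟨a ≫ b', comp_mem_stablyNull hV a b', (Category.assoc _ _ _).trans (congrArg _ hb')⟩
    obtain ⟨h', hh', w⟩ := hle hh
    obtain ⟨c, hc'⟩ := hk.exists_lift (h - h') (by
      rw [Preadditive.sub_comp, sub_eq_zero]; exact w.symm)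
    have hck : c ≫ k ∈ stablyNull (X ∩ Y) Q A :=
      stablyNull_le_comap k (hc.mem_stablyNull hcomp hQ hK c)
    rw [← sub_add_cancel h h', ← hc']
    exact add_mem hck hh'

lemma isDeflation_of_fibO (hcomp : IsCompleteCP E X Y) (hwic : IsWIC E) {ω : Set 𝒜} {A B : 𝒜}
    {p : A ⟶ B} (hp : FibO ω p) (hw : stableEquivalences X ω p) : IsDeflation E p := by
  obtain ⟨Y₀, X₀, i, d, h, hX, -⟩ := (hcomp B).1
  obtain ⟨l, rfl⟩ := hp.exists_lift hw hX d
  exact .of_comp hwic h.isDeflation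

lemma exists_extension_of_mem_stablyNull (hc : IsCotorsionPair E X Y) {A B Q M : 𝒜} (hQ : Q ∈ X)
    {i : A ⟶ B} {d : B ⟶ Q} (h : E.conflation i d) {a : A ⟶ M}
    (ha : a ∈ stablyNull (X ∩ Y) A M) : ∃ b : B ⟶ M, i ≫ b = a :=
  stablyNull_le (S := (Preadditive.leftComp M i).range) (fun _ hV f g ↦
    have ⟨f', hf'⟩ := hc.exists_extension hQ hV.2 h f
    ⟨f' ≫ g, (Category.assoc _ _ _).symm.trans (congrArg (· ≫ g) hf')⟩) ha

lemma exists_extension_kernel (hc : IsCotorsionPair E X Y) {A B K Q V Q' : 𝒜} {p : A ⟶ B}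
    (hp : FibO (X ∩ Y) p) (hw : stableEquivalences X (X ∩ Y) p) {k : K ⟶ A}
    (hk : E.conflation k p) (hQ : Q ∈ X) (hQ' : Q' ∈ X) {m : Q ⟶ V} {n : V ⟶ Q'}
    (hmn : E.conflation m n) (d : Q ⟶ K) : ∃ e : V ⟶ K, m ≫ e = d := by
  have hdk : d ≫ k ∈ stablyNull (X ∩ Y) Q A := (stableEquivalences_iff.1 hw Q hQ).2 _ (by
    rw [Category.assoc, E.comp_zero hk, comp_zero]; exact zero_mem _)
  obtain ⟨a, ha⟩ := hc.exists_extension_of_mem_stablyNull hQ' hmn hdk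
  obtain ⟨b, hb⟩ := hmn.exists_desc (a ≫ p) (by
    rw [reassoc_of% ha, E.comp_zero hk, comp_zero])
  obtain ⟨c, rfl⟩ := hp.exists_lift hw hQ' b
  obtain ⟨e, he⟩ := hk.exists_lift (a - n ≫ c) (by
    rw [Preadditive.sub_comp, Category.assoc, hb, sub_self])
  have := hk.mono
  refine ⟨e, ?_⟩
  rw [← cancel_mono k, Category.assoc, he, Preadditive.comp_sub, ha, ← Category.assoc,
    E.comp_zero hmn, zero_comp, sub_zero]

lemma mem_right_of_exists_extension (hc : IsCotorsionPair E X Y) (hcomp : IsCompleteCP E X Y)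
    (hher : IsHereditaryCP E X Y) {K : 𝒜}
    (hK : ∀ {Q V Q' : 𝒜} {m : Q ⟶ V} {n : V ⟶ Q'}, E.conflation m n → Q ∈ X → Q' ∈ X →
      ∀ d : Q ⟶ K, ∃ e : V ⟶ K, m ≫ e = d) : K ∈ Y := by
  obtain ⟨Y₀, X₀, i, d, hid, hX₀, hY₀⟩ := (hcomp K).1
  obtain ⟨V, Q', m, n, hmn, hQ', hV⟩ := hc.exists_conflation_core hcomp hX₀
  obtain ⟨e, hme⟩ := hK hmn hX₀ hQ' d
  obtain ⟨P, q, j, -, hq, -, hj, -⟩ := hid.exists_conflation_comp hmn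
  obtain ⟨r, hr⟩ := hq.exists_desc e (by rw [Category.assoc, hme, E.comp_zero hid])
  have := hid.epi
  refine hc.mem_right_of_retract (i := j) (r := r) ?_ (hher.2 _ _ hq hY₀ hV.2)
  rw [← cancel_epi d, reassoc_of% hj, hr, hme, Category.comp_id]

lemma tFibO_of_fibO (hc : IsCotorsionPair E X Y) (hcomp : IsCompleteCP E X Y)
    (hher : IsHereditaryCP E X Y) (hwic : IsWIC E) {A B : 𝒜} {p : A ⟶ B}
    (hp : FibO (X ∩ Y) p) (hw : stableEquivalences X (X ∩ Y) p) : TFibO E Y p :=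
  have ⟨K, k, hk⟩ := isDeflation_of_fibO hcomp hwic hp hw
  ⟨K, k, hk, hc.mem_right_of_exists_extension hcomp hher fun hmn hQ hQ' ↦
    hc.exists_extension_kernel hp hw hk hQ hQ' hmn⟩

lemma weqO_iff (hc : IsCotorsionPair E X Y) (hcomp : IsCompleteCP E X Y)
    (hher : IsHereditaryCP E X Y) (hwic : IsWIC E) (hcf : IsContravariantlyFinite (X ∩ Y))
    {A B : 𝒜} {f : A ⟶ B} : WeqO E (X ∩ Y) Y f ↔ stableEquivalences X (X ∩ Y) f := by
  constructor
  · rintro ⟨V, hV, t, K, k, hk, hK⟩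
    have h := (stableEquivalences X (X ∩ Y)).comp_mem _ _ (stableEquivalences_inl hV A)
      (hc.stableEquivalences_of_tFibO hcomp ⟨K, k, hk, hK⟩)
    rwa [biprod.inl_desc] at h
  · intro hf
    obtain ⟨V, t, ht⟩ := hcf B
    have hdesc : stableEquivalences X (X ∩ Y) (biprod.desc f t) :=
      (stableEquivalences X (X ∩ Y)).of_precomp (W' := stableEquivalences X (X ∩ Y)) biprod.inl _
        (stableEquivalences_inl ht.1 A) (by rwa [biprod.inl_desc])
    obtain ⟨K, k, hk, hK⟩ := hc.tFibO_of_fibO hcomp hher hwic (.biprod_desc ht f) hdesc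
    exact ⟨V, ht.1, t, K, k, hk, hK⟩

end IsCotorsionPair

/-! ### The model structure of a cotorsion pair -/

omit [HasBinaryBiproducts 𝒜] in
lemma fibrant_fibO (ω : Set 𝒜) (A : 𝒜) : Fibrant (FibO ω) A := fun _ _ _ ↦
  ⟨0, (isZero_zero 𝒜).eq_of_tgt _ _⟩

omit [Preadditive 𝒜] [HasZeroObject 𝒜] [HasBinaryBiproducts 𝒜] in
lemma IsRetractMor.of_retract {P : MorphismProperty 𝒜} [P.IsStableUnderRetracts]
    {A' B' A B : 𝒜} {g : A' ⟶ B'} {f : A ⟶ B} (h : IsRetractMor g f) (hf : P f) : P g := by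
  obtain ⟨φ₁, ψ₁, φ₂, ψ₂, h₁, h₂, hφ, hψ⟩ := h
  exact P.of_retract ⟨Arrow.homMk φ₁ φ₂ hφ, Arrow.homMk ψ₁ ψ₂ hψ.symm, by ext <;> simp [h₁, h₂]⟩ hf

namespace IsCotorsionPair

variable {X Y : Set 𝒜}

lemma cofibrant_coFibO_iff (hc : IsCotorsionPair E X Y) {A : 𝒜} :
    Cofibrant (CoFibO E X) A ↔ A ∈ X := by
  refine ⟨fun ⟨Z, d, h, hZ⟩ ↦ ?_, fun h ↦ ⟨A, 𝟙 A, E.id_deflation A, h⟩⟩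
  obtain ⟨g, hg⟩ := h.exists_desc (𝟙 A) zero_comp
  exact hc.mem_left_of_retract hg hZ

lemma trivialObj_weqO_iff (hc : IsCotorsionPair E X Y) (hcomp : IsCompleteCP E X Y)
    (hher : IsHereditaryCP E X Y) (hwic : IsWIC E) (hcf : IsContravariantlyFinite (X ∩ Y))
    {A : 𝒜} : TrivialObj (WeqO E (X ∩ Y) Y) A ↔ A ∈ Y := by
  constructor
  · rintro ⟨V, hV, t, K, k, hk, hK⟩
    have hsnd : (biprod.snd : (0 : 𝒜) ⊞ V ⟶ V) ≫ biprod.inr = 𝟙 _ := by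
      ext
      simp
    exact hher.2 _ _ hk hK (hc.mem_right_of_retract hsnd hV.2)
  · refine fun hA ↦ (hc.weqO_iff hcomp hher hwic hcf).2 (stableEquivalences_iff.2 fun Q hQ ↦
      ⟨fun g ↦ ⟨0, hc.mem_stablyNull hcomp hQ hA _⟩, fun h _ ↦ ?_⟩)
    rw [(isZero_zero 𝒜).eq_of_tgt h 0]
    exact zero_mem _

lemma coFibO_of_retract (hc : IsCotorsionPair E X Y) (hwic : IsWIC E) {A' B' A B : 𝒜}
    {g : A' ⟶ B'} {f : A ⟶ B} (h : IsRetractMor g f) (hf : CoFibO E X f) : CoFibO E X g := by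
  obtain ⟨φ₁, ψ₁, φ₂, ψ₂, h₁, h₂, hφ, hψ⟩ := h
  obtain ⟨Z, z, hz, hZ⟩ := hf
  have hgφ₂ : IsInflation E (g ≫ φ₂) := by
    obtain ⟨C, k, p, hp, -⟩ := hwic.exists_conflation_of_retract h₁
    exact hφ ▸ hp.isInflation.comp hz.isInflation
  obtain ⟨Z', z', hz'⟩ := hgφ₂.of_comp_of_retract hwic h₂
  obtain ⟨φ₃, hφ₃⟩ := hz'.exists_desc (φ₂ ≫ z) (by
    rw [← reassoc_of% hφ, E.comp_zero hz, comp_zero])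
  obtain ⟨ψ₃, hψ₃⟩ := hz.exists_desc (ψ₂ ≫ z') (by
    rw [reassoc_of% hψ, E.comp_zero hz', comp_zero])
  have := hz'.epi
  have h₃ : φ₃ ≫ ψ₃ = 𝟙 Z' := by
    rw [← cancel_epi z', reassoc_of% hφ₃, hψ₃, reassoc_of% h₂, Category.comp_id]
  exact ⟨Z', z', hz', hc.mem_left_of_retract h₃ hZ⟩

lemma exists_coFibO_tFibO_fac (hc : IsCotorsionPair E X Y) (hcomp : IsCompleteCP E X Y)
    {A B : 𝒜} (f : A ⟶ B) :
    ∃ (Z : 𝒜) (j : A ⟶ Z) (q : Z ⟶ B), j ≫ q = f ∧ CoFibO E X j ∧ TFibO E Y q := by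
  -- Resolve the kernel of the deflation `(d, f) : X₀ ⊞ A ⟶ B` by an object of `Y`, and push out.
  obtain ⟨Y₀, X₀, i, d, hid, hX₀, -⟩ := (hcomp B).1
  obtain ⟨K, k, hk⟩ := hid.isDeflation.biprod_desc f
  obtain ⟨Y₁, X₁, m, n, hmn, hX₁, hY₁⟩ := (hcomp K).2
  obtain ⟨Z, u, v, q, hp, hq, hu⟩ := hk.exists_pushout m
  obtain ⟨e, he, -⟩ := hmn.of_isPushout hp.flip
  obtain ⟨P, c, j', e', hj, hj', -⟩ := (E.conflation_inr_fst X₀ A).exists_conflation_comp he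
  exact ⟨Z, biprod.inr ≫ u, q, by rw [Category.assoc, hu, biprod.inr_desc],
    ⟨P, c, hj, hc.mem_left_of_conflation hj' hX₀ hX₁⟩, Y₁, v, hq, hY₁⟩

lemma exists_lift_of_weqO (hc : IsCotorsionPair E X Y) {A B M N : 𝒜} {i : A ⟶ B} {p : M ⟶ N}
    {a : A ⟶ M} {b : B ⟶ N} (hi : CoFibO E X i) (hw : WeqO E (X ∩ Y) Y i) (hp : FibO (X ∩ Y) p)
    (w : a ≫ p = i ≫ b) : ∃ s : B ⟶ M, i ≫ s = a ∧ s ≫ p = b := by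
  obtain ⟨Z, z, hz, hZ⟩ := hi
  obtain ⟨V, hV, t, K, k, hk, hK⟩ := hw
  obtain ⟨s, his, hs⟩ := hc.exists_lift_of_commSq hZ hK hz hk (a := biprod.inl) (b := 𝟙 B)
    (by rw [biprod.inl_desc, Category.comp_id])
  obtain ⟨l, hl⟩ := hp V hV (t ≫ b)
  have hdesc : biprod.desc a l ≫ p = biprod.desc i t ≫ b := by ext <;> simp [w, hl]
  exact ⟨s ≫ biprod.desc a l, by rw [reassoc_of% his, biprod.inl_desc],
    by rw [Category.assoc, hdesc, reassoc_of% hs]⟩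

lemma fibO_and_weqO_iff (hc : IsCotorsionPair E X Y) (hcomp : IsCompleteCP E X Y)
    (hher : IsHereditaryCP E X Y) (hwic : IsWIC E) (hcf : IsContravariantlyFinite (X ∩ Y))
    {A B : 𝒜} {p : A ⟶ B} : FibO (X ∩ Y) p ∧ WeqO E (X ∩ Y) Y p ↔ TFibO E Y p := by
  rw [hc.weqO_iff hcomp hher hwic hcf]
  exact ⟨fun ⟨hp, hw⟩ ↦ hc.tFibO_of_fibO hcomp hher hwic hp hw,
    fun hp ↦ ⟨hc.fibO_of_tFibO hp, hc.stableEquivalences_of_tFibO hcomp hp⟩⟩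

lemma isModelStructure (hc : IsCotorsionPair E X Y) (hcomp : IsCompleteCP E X Y)
    (hher : IsHereditaryCP E X Y) (hwic : IsWIC E) (hcf : IsContravariantlyFinite (X ∩ Y)) :
    IsModelStructure (CoFibO E X) (FibO (X ∩ Y)) (WeqO E (X ∩ Y) Y) := by
  have tFibO_iff {A B : 𝒜} (p : A ⟶ B) := hc.fibO_and_weqO_iff hcomp hher hwic hcf (p := p)
  have weqO_eq : WeqO E (X ∩ Y) Y = stableEquivalences X (X ∩ Y) := by
    ext A B f
    exact hc.weqO_iff hcomp hher hwic hcf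
  have : (WeqO E (X ∩ Y) Y).HasTwoOutOfThreeProperty := weqO_eq ▸ inferInstance
  have : (WeqO E (X ∩ Y) Y).IsStableUnderRetracts := weqO_eq ▸ inferInstance
  exact
    { weq_comp := (WeqO E (X ∩ Y) Y).comp_mem
      weq_cancel_left := (WeqO E (X ∩ Y) Y).of_precomp
      weq_cancel_right := (WeqO E (X ∩ Y) Y).of_postcomp
      retract_cofib := fun _ _ ↦ hc.coFibO_of_retract hwic
      retract_fib := fun _ _ ↦ FibO.of_retract
      retract_weq := fun _ _ ↦ IsRetractMor.of_retract
      lifting_left := fun _ _ _ _ hi hw hp w ↦ hc.exists_lift_of_weqO hi hw hp w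
      lifting_right := fun _ p _ _ ⟨_, _, hz, hZ⟩ hp hw w ↦
        have ⟨_, _, hk, hK⟩ := (tFibO_iff p).1 ⟨hp, hw⟩
        hc.exists_lift_of_commSq hZ hK hz hk w
      fact_left := fun {A B} f ↦
        have ⟨V, t, ht⟩ := hcf B
        ⟨A ⊞ V, biprod.inl, biprod.desc f t, biprod.inl_desc f t,
          ⟨V, biprod.snd, E.conflation_inl_snd A V, ht.1.1⟩,
          weqO_eq ▸ stableEquivalences_inl ht.1 A, .biprod_desc ht f⟩
      fact_right := fun f ↦
        have ⟨Z, j, q, w, hj, hq⟩ := hc.exists_coFibO_tFibO_fac hcomp f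
        ⟨Z, j, q, w, hj, (tFibO_iff q).2 hq⟩ }

theorem isWeaklyProjModelStr (hc : IsCotorsionPair E X Y) (hcomp : IsCompleteCP E X Y)
    (hher : IsHereditaryCP E X Y) (hwic : IsWIC E) (hcf : IsContravariantlyFinite (X ∩ Y)) :
    IsWeaklyProjModelStr E (CoFibO E X) (FibO (X ∩ Y)) (WeqO E (X ∩ Y) Y) := by
  refine ⟨hc.isModelStructure hcomp hher hwic hcf, fibrant_fibO _, fun f ↦ ?_, fun f ↦ ?_⟩
  · simp only [hc.cofibrant_coFibO_iff]
    rfl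
  · simp only [fibrant_fibO, true_and, hc.trivialObj_weqO_iff hcomp hher hwic hcf]
    exact hc.fibO_and_weqO_iff hcomp hher hwic hcf

end IsCotorsionPair

/-! ### The cotorsion pair of a model structure -/

/-- The class `𝒞` of cofibrant objects. -/
abbrev cofibrantObjects (C : MorphismProperty 𝒜) : Set 𝒜 := {A | Cofibrant C A}

/-- The class `T𝓕` of trivially fibrant objects. -/
abbrev triviallyFibrantObjects (F W : MorphismProperty 𝒜) : Set 𝒜 :=
  {A | Fibrant F A ∧ TrivialObj W A}

variable {C F W : MorphismProperty 𝒜}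

namespace IsModelStructure

section

omit [HasBinaryBiproducts 𝒜]

lemma trivialObj_of_retract (hM : IsModelStructure C F W) {A B : 𝒜} {i : A ⟶ B} {r : B ⟶ A}
    (h : i ≫ r = 𝟙 A) (hB : TrivialObj W B) : TrivialObj W A :=
  hM.retract_weq _ _ ⟨𝟙 _, 𝟙 _, i, r, by simp, h, by simp, by simp⟩ hB

lemma cofibrant_of_retract (hM : IsModelStructure C F W) {A B : 𝒜} {i : A ⟶ B} {r : B ⟶ A}
    (h : i ≫ r = 𝟙 A) (hB : Cofibrant C B) : Cofibrant C A :=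
  hM.retract_cofib _ _ ⟨𝟙 _, 𝟙 _, i, r, by simp, h, by simp, by simp⟩ hB

lemma exists_cofibrant_trivialFib (hM : IsModelStructure C F W) (A : 𝒜) :
    ∃ (Q : 𝒜) (q : Q ⟶ A), Cofibrant C Q ∧ F q ∧ W q := by
  obtain ⟨Q, j, q, -, hj, hq, hq'⟩ := hM.fact_right (0 : (0 : 𝒜) ⟶ A)
  rw [(isZero_zero 𝒜).eq_of_src j 0] at hj
  exact ⟨Q, q, hj, hq, hq'⟩

lemma exists_cofibrant_trivialObj_fib (hM : IsModelStructure C F W) (A : 𝒜) :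
    ∃ (V : 𝒜) (q : V ⟶ A), Cofibrant C V ∧ TrivialObj W V ∧ F q := by
  obtain ⟨V, j, q, -, hj, hj', hq⟩ := hM.fact_left (0 : (0 : 𝒜) ⟶ A)
  rw [(isZero_zero 𝒜).eq_of_src j 0] at hj hj'
  exact ⟨V, q, hj, hj', hq⟩

lemma fibO_of_fib (hM : IsModelStructure C F W) {A B : 𝒜} {f : A ⟶ B} (hf : F f) :
    FibO (cofibrantObjects C ∩ triviallyFibrantObjects F W) f := fun V hV g ↦
  have ⟨l, _, hl⟩ := hM.lifting_left (0 : (0 : 𝒜) ⟶ V) f 0 g hV.1 hV.2.2 hf (by simp)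
  ⟨l, hl⟩

lemma exists_retraction (hM : IsModelStructure C F W) {A B : 𝒜} {i : A ⟶ B} (hi : C i)
    (hi' : W i) (hA : Fibrant F A) : ∃ r : B ⟶ A, i ≫ r = 𝟙 A :=
  have ⟨r, hr, _⟩ := hM.lifting_left i (0 : A ⟶ (0 : 𝒜)) (𝟙 A) 0 hi hi' hA (by simp)
  ⟨r, hr⟩

end

lemma trivialObj_of_conflation (hM : IsModelStructure C F W) {A B D : 𝒜} {i : A ⟶ B} {d : B ⟶ D}
    (h : E.conflation i d) (hi : C i) (hi' : W i) : TrivialObj W D := by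
  obtain ⟨V, q, -, hV, hq⟩ := hM.exists_cofibrant_trivialObj_fib D
  -- `D` is a retract of the trivial object `V`, because `d` lifts along the fibration `V ⟶ D`.
  obtain ⟨l, hl, hlq⟩ := hM.lifting_left i q 0 d hi hi' hq (by rw [zero_comp, E.comp_zero h])
  obtain ⟨u, rfl⟩ := h.exists_desc l hl
  have := h.epi
  refine hM.trivialObj_of_retract (i := u) (r := q) ?_ hV
  rw [← cancel_epi d, ← Category.assoc, hlq, Category.comp_id]

lemma weq_inl (hM : IsModelStructure C F W) {V : 𝒜}
    (hV : V ∈ cofibrantObjects C ∩ triviallyFibrantObjects F W) (A : 𝒜) :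
    W (biprod.inl : A ⟶ A ⊞ V) := by
  obtain ⟨Z, i, p, hip, -, hi, hp⟩ := hM.fact_left (biprod.inl : A ⟶ A ⊞ V)
  obtain ⟨l, hl⟩ := hM.fibO_of_fib hp V hV biprod.inr
  refine hM.retract_weq _ i ⟨𝟙 _, 𝟙 _, biprod.desc i l, p, by simp, ?_, by simp, by simp [hip]⟩ hi
  ext <;> simp [hip, hl]

end IsModelStructure

namespace IsWeaklyProjModelStr

lemma exists_conflation_left (h : IsWeaklyProjModelStr E C F W) (A : 𝒜) :
    ∃ (Y₀ X₀ : 𝒜) (i : Y₀ ⟶ X₀) (d : X₀ ⟶ A), E.conflation i d ∧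
      X₀ ∈ cofibrantObjects C ∧ Y₀ ∈ triviallyFibrantObjects F W := by
  obtain ⟨hM, -, -, htf⟩ := h
  obtain ⟨Q, q, hQ, hq⟩ := hM.exists_cofibrant_trivialFib A
  obtain ⟨K, k, hk, hK⟩ := (htf q).1 hq
  exact ⟨K, Q, k, q, hk, hQ, hK⟩

lemma exists_conflation_right (h : IsWeaklyProjModelStr E C F W) (A : 𝒜) :
    ∃ (Y₁ X₁ : 𝒜) (i : A ⟶ Y₁) (d : Y₁ ⟶ X₁), E.conflation i d ∧
      X₁ ∈ cofibrantObjects C ∧ Y₁ ∈ triviallyFibrantObjects F W := by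
  obtain ⟨hM, hfib, hcof, htf⟩ := h
  obtain ⟨Z, j, q, -, hj, hq⟩ := hM.fact_right (0 : A ⟶ (0 : 𝒜))
  obtain ⟨K, k, hk, -, hK⟩ := (htf q).1 hq
  obtain ⟨D, d, hd, hD⟩ := (hcof j).1 hj
  obtain ⟨g, hg⟩ := hk.exists_lift (𝟙 Z) ((isZero_zero 𝒜).eq_of_tgt _ _)
  exact ⟨Z, D, j, d, hd, hD, hfib Z, hM.trivialObj_of_retract hg hK⟩

theorem isCompleteCP (h : IsWeaklyProjModelStr E C F W) :
    IsCompleteCP E (cofibrantObjects C) (triviallyFibrantObjects F W) := fun A ↦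
  ⟨h.exists_conflation_left A, h.exists_conflation_right A⟩

lemma ext1IsZero (h : IsWeaklyProjModelStr E C F W) {A B : 𝒜} (hA : A ∈ cofibrantObjects C)
    (hB : B ∈ triviallyFibrantObjects F W) : Ext1IsZero E A B := by
  intro M i d hd
  obtain ⟨hdF, hdW⟩ := (h.2.2.2 d).2 ⟨B, i, hd, hB⟩
  obtain ⟨s, -, hs⟩ := h.1.lifting_right (0 : (0 : 𝒜) ⟶ A) d 0 (𝟙 A) hA hdF hdW (by simp)
  obtain ⟨r, hr, -⟩ := hd.exists_retraction hs
  exact ⟨r, hr⟩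

theorem isCotorsionPair (h : IsWeaklyProjModelStr E C F W) :
    IsCotorsionPair E (cofibrantObjects C) (triviallyFibrantObjects F W) := by
  refine ⟨fun A ↦ ⟨fun hA B hB ↦ h.ext1IsZero hA hB, fun hA ↦ ?_⟩,
    fun B ↦ ⟨fun hB A hA ↦ h.ext1IsZero hA hB, fun hB ↦ ?_⟩⟩
  · obtain ⟨Y₀, X₀, i, d, hd, hX, hY⟩ := h.exists_conflation_left A
    obtain ⟨r, hr⟩ := hA Y₀ hY i d hd
    obtain ⟨s, hs, -⟩ := hd.exists_section hr
    exact h.1.cofibrant_of_retract hs hX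
  · obtain ⟨Y₁, X₁, i, d, hd, hX, hY⟩ := h.exists_conflation_right B
    obtain ⟨r, hr⟩ := hB X₁ hX i d hd
    exact ⟨h.2.1 B, h.1.trivialObj_of_retract hr hY.2⟩

theorem isHereditaryCP (h : IsWeaklyProjModelStr E C F W) :
    IsHereditaryCP E (cofibrantObjects C) (triviallyFibrantObjects F W) := by
  refine h.isCotorsionPair.isHereditaryCP_of_right h.isCompleteCP fun {_ _ B} i d hd hK hA ↦
    ⟨h.2.1 B, ?_⟩
  have hW := h.1.weq_comp 0 d hA.2 ((h.2.2.2 d).2 ⟨_, i, hd, hK⟩).2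
  rwa [zero_comp] at hW

theorem isContravariantlyFinite (h : IsWeaklyProjModelStr E C F W) :
    IsContravariantlyFinite (cofibrantObjects C ∩ triviallyFibrantObjects F W) := fun B ↦
  have ⟨V, q, hC, hW, hq⟩ := h.1.exists_cofibrant_trivialObj_fib B
  ⟨V, q, ⟨hC, h.2.1 V, hW⟩, h.1.fibO_of_fib hq⟩

lemma tCoFibO_of_trivialCofib (h : IsWeaklyProjModelStr E C F W) {A B : 𝒜} {i : A ⟶ B} (hi : C i)
    (hi' : W i) : TCoFibO E (cofibrantObjects C ∩ triviallyFibrantObjects F W) i := by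
  obtain ⟨hM, hfib, hcof, -⟩ := h
  obtain ⟨D, d, hd, hD⟩ := (hcof i).1 hi
  exact ⟨hM.exists_retraction hi hi' (hfib A), D, d, hd, hD, hfib D,
    hM.trivialObj_of_conflation hd hi hi'⟩

theorem eq_coFibO (h : IsWeaklyProjModelStr E C F W) : C = CoFibO E (cofibrantObjects C) := by
  ext A B f
  exact h.2.2.1 f

lemma fib_of_fibO (h : IsWeaklyProjModelStr E C F W) {A B : 𝒜} {f : A ⟶ B}
    (hf : FibO (cofibrantObjects C ∩ triviallyFibrantObjects F W) f) : F f := by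
  obtain ⟨Z, i, p, rfl, hi, hi', hp⟩ := h.1.fact_left f
  obtain ⟨⟨r, hr⟩, D, d, hd, hD⟩ := h.tCoFibO_of_trivialCofib hi hi'
  obtain ⟨s, -, -, total⟩ := hd.exists_section hr
  obtain ⟨l, hl⟩ := hf D hD (s ≫ p)
  -- `i ≫ p` is a retract of `p`: as `Z ≅ A ⊞ D`, the lift `l` extends `𝟙 A` to a map `Z ⟶ A`.
  have hretract : i ≫ (r + d ≫ l) = 𝟙 A := by
    rw [Preadditive.comp_add, hr, reassoc_of% E.comp_zero hd, zero_comp, add_zero]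
  have hfac : (r + d ≫ l) ≫ i ≫ p = p := by
    rw [Preadditive.add_comp, Category.assoc, hl]
    simpa only [Preadditive.add_comp, Category.assoc, Category.id_comp] using total =≫ p
  exact h.1.retract_fib _ p ⟨i, r + d ≫ l, 𝟙 _, 𝟙 _, hretract, Category.comp_id _,
    (Category.comp_id _).symm, by rw [Category.comp_id, hfac]⟩ hp

theorem eq_fibO (h : IsWeaklyProjModelStr E C F W) :
    F = FibO (cofibrantObjects C ∩ triviallyFibrantObjects F W) := by
  ext A B f
  exact ⟨h.1.fibO_of_fib, h.fib_of_fibO⟩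

lemma weqO_of_weq (h : IsWeaklyProjModelStr E C F W) {A B : 𝒜} {f : A ⟶ B} (hf : W f) :
    WeqO E (cofibrantObjects C ∩ triviallyFibrantObjects F W) (triviallyFibrantObjects F W) f := by
  obtain ⟨Z, i, p, rfl, hi, hi', hp⟩ := h.1.fact_left f
  obtain ⟨⟨r, hr⟩, D, d, hd, hD⟩ := h.tCoFibO_of_trivialCofib hi hi'
  obtain ⟨s, hs, hsr, total⟩ := hd.exists_section hr
  obtain ⟨K, k, hk, hK⟩ := (h.2.2.2 p).1 ⟨hp, h.1.weq_cancel_left i p hi' hf⟩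
  let e : Z ≅ A ⊞ D := ⟨biprod.lift r d, biprod.desc i s, by rw [biprod.lift_desc, total], by
    ext <;> simp [hr, hs, hsr, E.comp_zero hd]⟩
  have he : e.hom ≫ biprod.desc (i ≫ p) (s ≫ p) = p := by
    rw [← Iso.eq_inv_comp]
    ext <;> simp [e]
  exact ⟨D, hD, s ≫ p, K, k ≫ e.hom,
    E.conflation_iso (Iso.refl K) e (Iso.refl B) hk (by simp) (by simp [he]), hK⟩

lemma weq_of_weqO (h : IsWeaklyProjModelStr E C F W) {A B : 𝒜} {f : A ⟶ B}
    (hf : WeqO E (cofibrantObjects C ∩ triviallyFibrantObjects F W)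
      (triviallyFibrantObjects F W) f) : W f := by
  obtain ⟨V, hV, t, K, k, hk, hK⟩ := hf
  have hcomp := h.1.weq_comp _ _ (h.1.weq_inl hV A) ((h.2.2.2 _).2 ⟨K, k, hk, hK⟩).2
  rwa [biprod.inl_desc] at hcomp

theorem eq_weqO (h : IsWeaklyProjModelStr E C F W) :
    W = WeqO E (cofibrantObjects C ∩ triviallyFibrantObjects F W)
      (triviallyFibrantObjects F W) := by
  ext A B f
  exact ⟨h.weqO_of_weq, h.weq_of_weqO⟩

end IsWeaklyProjModelStr

/-- The correspondence of Beligiannis and Reiten: `Φ` and `Ψ` are mutually inverse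
bijections between hereditary complete cotorsion pairs with contravariantly finite
core and weakly projective model structures. -/
theorem stmt_4 (E : ExactStructure 𝒜) (hwic : IsWIC E) :
    (∀ X Y : Set 𝒜, IsCotorsionPair E X Y → IsCompleteCP E X Y →
      IsHereditaryCP E X Y → IsContravariantlyFinite (X ∩ Y) →
      IsWeaklyProjModelStr E (CoFibO E X) (FibO (X ∩ Y)) (WeqO E (X ∩ Y) Y) ∧
      {A : 𝒜 | Cofibrant (CoFibO E X) A} = X ∧
      {A : 𝒜 | Fibrant (FibO (X ∩ Y)) A ∧ TrivialObj (WeqO E (X ∩ Y) Y) A} = Y) ∧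
    (∀ C F W : MorphismProperty 𝒜, IsWeaklyProjModelStr E C F W →
      IsCotorsionPair E {A : 𝒜 | Cofibrant C A} {A : 𝒜 | Fibrant F A ∧ TrivialObj W A} ∧
      IsCompleteCP E {A : 𝒜 | Cofibrant C A} {A : 𝒜 | Fibrant F A ∧ TrivialObj W A} ∧
      IsHereditaryCP E {A : 𝒜 | Cofibrant C A} {A : 𝒜 | Fibrant F A ∧ TrivialObj W A} ∧
      IsContravariantlyFinite
        ({A : 𝒜 | Cofibrant C A} ∩ {A : 𝒜 | Fibrant F A ∧ TrivialObj W A}) ∧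
      C = CoFibO E {A : 𝒜 | Cofibrant C A} ∧
      F = FibO ({A : 𝒜 | Cofibrant C A} ∩ {A : 𝒜 | Fibrant F A ∧ TrivialObj W A}) ∧
      W = WeqO E ({A : 𝒜 | Cofibrant C A} ∩ {A : 𝒜 | Fibrant F A ∧ TrivialObj W A})
            {A : 𝒜 | Fibrant F A ∧ TrivialObj W A}) := by
  refine ⟨fun X Y hc hcomp hher hcf ↦ ⟨hc.isWeaklyProjModelStr hcomp hher hwic hcf, ?_, ?_⟩,
    fun C F W h ↦ ⟨h.isCotorsionPair, h.isCompleteCP, h.isHereditaryCP,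
      h.isContravariantlyFinite, h.eq_coFibO, h.eq_fibO, h.eq_weqO⟩⟩
  · ext A
    exact hc.cofibrant_coFibO_iff
  · ext A
    exact (and_iff_right (fibrant_fibO _ A)).trans (hc.trivialObj_weqO_iff hcomp hher hwic hcf)
end

section
/- Let α : A→B and β : B→C be morphisms in an exact category 𝒜. If α is an inflation and βα is a deflation, then β is a deflation and there is an admissible exact sequence 0 → Ker(βα) → Ker β → Coker α → 0 in 𝒜. Dually, if β is a deflation and βα is an inflation, then α is an inflation and there is an admissible exact sequence 0 → Ker β → Coker α → Coker(βα) → 0. -/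
open CategoryTheory Limits ZeroObject

universe v u

variable {𝒜 : Type u} [Category.{v} 𝒜] [Preadditive 𝒜] [HasZeroObject 𝒜]
  [HasBinaryBiproducts 𝒜]

/-!
Write `0 → K → B → C → 0` for the conflation ending in `β` and suppose `α ≫ β` is an inflation with
cokernel `q`. The deflation `β ≫ q` has kernel `(α, k) : A ⊞ K ⟶ B`, so `α = inl ≫ (α, k)` is a
composite of two inflations. Composites of inflations are inflations and satisfy Noether's
isomorphism theorem, which yields `0 → K → Coker α → Coker (α ≫ β) → 0`. The other half of the
theorem is this one in the opposite category, whose exact structure again depends on inflations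
being closed under composition.

That closure is not an axiom here; it is Keller's argument. For conflations `A → B → D` and
`B → C → Z`, push `j : B ⟶ C` out along `p : B ⟶ D` to get `f : C ⟶ P`, whose kernel is `A ⟶ C`.
It remains to see that `f` is a deflation; this holds after precomposition with the split
epimorphism `(1, j) : C ⊞ B ⟶ C`, because the result factors as `C ⊞ B ⟶ C ⊞ D ⟶ P`, and both
factors are pullbacks of deflations.
-/

section Preadditive

variable {𝒞 : Type*} [Category* 𝒞] [Preadditive 𝒞]

theorem isPushout_of_isPullback_of_isSplitEpi {W X Y Z : 𝒞} {fst : W ⟶ X} {snd : W ⟶ Y}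
    {s : X ⟶ Z} {t : Y ⟶ Z} [IsSplitEpi s] (h : IsPullback fst snd s t) :
    IsPushout fst snd s t := by
  obtain ⟨σ, hσ_fst, hσ_snd⟩ := h.exists_lift (t ≫ section_ s) (𝟙 Y) (by simp)
  obtain ⟨l, hl_fst, hl_snd⟩ := h.exists_lift (s ≫ section_ s - 𝟙 X) 0 (by simp)
  have : Epi snd := ⟨fun a b hab => by simpa [reassoc_of% hσ_snd] using σ ≫= hab⟩
  refine IsPushout.mk' h.w (fun _ _ _ hs _ => (cancel_epi s).1 hs) fun _ x y hxy => ?_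
  have hx : s ≫ section_ s ≫ x = x := by
    simpa [reassoc_of% hl_fst, reassoc_of% hl_snd, sub_eq_zero] using l ≫= hxy
  have hy : t ≫ section_ s ≫ x = y := by
    simpa [reassoc_of% hσ_fst, reassoc_of% hσ_snd] using σ ≫= hxy
  exact ⟨section_ s ≫ x, hx, hy⟩

theorem isPullback_biprod_map_id_snd [HasBinaryBiproducts 𝒞] (X : 𝒞) {Y Z : 𝒞} (f : Y ⟶ Z) :
    IsPullback (biprod.snd : X ⊞ Y ⟶ Y) (biprod.map (𝟙 X) f) f biprod.snd := by
  refine IsPullback.mk' (by simp) (fun _ φ φ' hsnd hmap => ?_) fun _ a b hab => ?_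
  · have hfst := hmap =≫ biprod.fst
    ext
    · simpa using hfst
    · exact hsnd
  · refine ⟨biprod.lift (b ≫ biprod.fst) a, by simp, ?_⟩
    ext <;> simp [hab]

theorem isPullback_biprod_fst_desc [HasZeroObject 𝒞] [HasBinaryBiproducts 𝒞]
    {X Y Z W : 𝒞} {i : X ⟶ Y} {d : Y ⟶ Z} (h : IsPullback i (0 : X ⟶ 0) d 0) (f : W ⟶ Y) :
    IsPullback biprod.fst (biprod.desc f i) (f ≫ d) d := by
  have hid : i ≫ d = 0 := by simpa using h.w
  refine IsPullback.mk' (by ext <;> simp [hid]) (fun _ φ φ' hfst hdesc => ?_) fun _ a b hab => ?_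
  · have hsnd : (φ ≫ biprod.snd) ≫ i = (φ' ≫ biprod.snd) ≫ i := by
      simpa [biprod.desc_eq, reassoc_of% hfst] using hdesc
    ext
    · exact hfst
    · exact h.hom_ext hsnd (by simp)
  · obtain ⟨l, hl, -⟩ := h.exists_lift (b - a ≫ f) 0 (by simp [hab])
    exact ⟨biprod.lift a l, by simp, by simp [hl]⟩

end Preadditive

namespace ExactStructure

variable {E : ExactStructure 𝒜}

namespace conflation

variable {X Y Z : 𝒜} {i : X ⟶ Y} {d : Y ⟶ Z}

-- Kernels and cokernels are squares with corner `0`, so that they paste with other such squares.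
theorem isPullback (h : E.conflation i d) : IsPullback i (0 : X ⟶ 0) d 0 := by
  obtain ⟨hi⟩ := E.isKernel h
  refine IsPullback.mk' (by simp [E.comp_zero h])
    (fun _ _ _ hφ _ => Fork.IsLimit.hom_ext hi hφ) fun _ a b hab => ?_
  obtain ⟨l, hl⟩ := KernelFork.IsLimit.lift' hi a (by simpa using hab)
  exact ⟨l, hl, (isZero_zero 𝒜).eq_of_tgt _ _⟩

theorem isPushout (h : E.conflation i d) : IsPushout i (0 : X ⟶ 0) d 0 := by
  obtain ⟨hd⟩ := E.isCokernel h
  refine IsPushout.mk' (by simp [E.comp_zero h])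
    (fun _ _ _ hφ _ => Cofork.IsColimit.hom_ext hd hφ) fun _ a b hab => ?_
  obtain ⟨l, hl⟩ := CokernelCofork.IsColimit.desc' hd a (by simpa using hab)
  exact ⟨l, hl, (isZero_zero 𝒜).eq_of_src _ _⟩

theorem exists_of_isPushout {X' Y' : 𝒜} {f : X ⟶ X'} {f' : Y ⟶ Y'} {i' : X' ⟶ Y'}
    (h : E.conflation i d) (hp : IsPushout i f f' i') :
    ∃ q : Y' ⟶ Z, E.conflation i' q ∧ f' ≫ q = d := by
  obtain ⟨Y₀, f₀, i₀, Q, q, hp₀, hq⟩ := E.pushout_inflation h f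
  have hcoker : IsPushout i (0 : X ⟶ 0) (f₀ ≫ q) 0 := by
    simpa using hp₀.paste_vert hq.isPushout
  let eY : Y₀ ≅ Y' := hp₀.isoIsPushout _ _ hp
  let eZ : Q ≅ Z := hcoker.isoIsPushout _ _ h.isPushout
  refine ⟨eY.inv ≫ q ≫ eZ.hom, E.conflation_iso (Iso.refl X') eY eZ hq ?_ ?_, ?_⟩
  · simp [eY]
  · simp
  · have hf' : f' ≫ eY.inv = f₀ := hp₀.inl_isoIsPushout_inv _ _ hp
    have hd : (f₀ ≫ q) ≫ eZ.hom = d := hcoker.inl_isoIsPushout_hom _ _ h.isPushout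
    rw [reassoc_of% hf', ← hd, Category.assoc]

theorem isPullback_of_isPushout {X' Y' : 𝒜} {f : X ⟶ X'} {f' : Y ⟶ Y'} {i' : X' ⟶ Y'}
    (h : E.conflation i d) (hp : IsPushout i f f' i') : IsPullback i f f' i' := by
  obtain ⟨q, hq, rfl⟩ := h.exists_of_isPushout hp
  have hker : IsPullback i (f ≫ (0 : X' ⟶ 0)) (f' ≫ q) 0 := by simpa using h.isPullback
  exact hker.of_bot hp.w hq.isPullback

end conflation

theorem conflation_id_zero (X : 𝒜) {Z : 𝒜} (hZ : IsZero Z) :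
    E.conflation (𝟙 X) (0 : X ⟶ Z) := by
  have : IsIso (0 : (0 : 𝒜) ⟶ Z) := (isZero_zero 𝒜).isIso hZ _
  have hp : IsPushout (0 : (0 : 𝒜) ⟶ Z) (0 : 0 ⟶ X) (0 : Z ⟶ X) (𝟙 X) :=
    IsPushout.of_horiz_isIso ⟨by simp⟩
  obtain ⟨q, hq, -⟩ := (E.id_deflation Z).exists_of_isPushout hp
  rwa [hZ.eq_of_tgt q 0] at hq

theorem conflation_biprod_inl_snd (X Y : 𝒜) :
    E.conflation (biprod.inl : X ⟶ X ⊞ Y) biprod.snd := by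
  obtain ⟨q, hq, hinr⟩ :=
    (E.id_deflation Y).exists_of_isPushout (IsPushout.of_has_biproduct X Y).flip
  have hsnd : q = biprod.snd := by ext <;> simp [hinr, E.comp_zero hq]
  rwa [hsnd] at hq

end ExactStructure

namespace IsDeflation

variable {E : ExactStructure 𝒜} {X Y Z : 𝒜} {d : Y ⟶ Z}

theorem comp_s6 {W : 𝒜} {d' : Z ⟶ W} (hd : IsDeflation E d) (hd' : IsDeflation E d') :
    IsDeflation E (d ≫ d') := by
  obtain ⟨_, _, h⟩ := hd
  obtain ⟨_, _, h'⟩ := hd'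
  exact E.deflation_comp h h'

theorem of_isPullback_s6 {Y' Z' : 𝒜} {f' : Y' ⟶ Y} {d' : Y' ⟶ Z'} {f : Z' ⟶ Z}
    (hd : IsDeflation E d) (hp : IsPullback f' d' d f) : IsDeflation E d' := by
  obtain ⟨_, _, h⟩ := hd
  obtain ⟨Y₀, f₀, d₀, K, k, hp₀, hk⟩ := E.pullback_deflation h f
  let eY : Y₀ ≅ Y' := hp₀.isoIsPullback _ _ hp
  exact ⟨K, k ≫ eY.hom,
    E.conflation_iso (Iso.refl K) eY (Iso.refl Z') hk (by simp) (by simp [eY])⟩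

theorem conflation_of_isPullback {i : X ⟶ Y} (hd : IsDeflation E d)
    (hi : IsPullback i (0 : X ⟶ 0) d 0) : E.conflation i d := by
  obtain ⟨_, _, h⟩ := hd
  let eX := h.isPullback.isoIsPullback _ _ hi
  exact E.conflation_iso eX (Iso.refl Y) (Iso.refl Z) h (by simp [eX]) (by simp)

theorem conflation_of_isSplitEpi_comp {W : 𝒜} {i : X ⟶ Y} {s : W ⟶ Y} [IsSplitEpi s]
    (h : IsDeflation E (s ≫ d)) (hi : IsPullback i (0 : X ⟶ 0) d 0) : E.conflation i d := by
  obtain ⟨K, κ, hκ⟩ := h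
  have hpush : IsPushout κ _ s i :=
    isPushout_of_isPullback_of_isSplitEpi (hκ.isPullback.of_bot' hi)
  obtain ⟨q, hq, hsq⟩ := hκ.exists_of_isPushout hpush
  rwa [(cancel_epi s).1 hsq] at hq

end IsDeflation

namespace ExactStructure

variable {E : ExactStructure 𝒜}

theorem conflation.comp_of_isPushout {A B C D Z P : 𝒜} {i : A ⟶ B} {p : B ⟶ D} {j : B ⟶ C}
    {d : C ⟶ Z} {f : C ⟶ P} {i' : D ⟶ P} (hi : E.conflation i p) (hj : E.conflation j d)
    (hp : IsPushout j p f i') : E.conflation (i ≫ j) f := by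
  have hker : IsPullback (i ≫ j) (0 : A ⟶ 0) f 0 := by
    simpa using hi.isPullback.paste_horiz (hj.isPullback_of_isPushout hp)
  obtain ⟨v, hv, rfl⟩ := hj.exists_of_isPushout hp
  have hmap : IsDeflation E (biprod.map (𝟙 C) p) :=
    IsDeflation.of_isPullback_s6 ⟨_, _, hi⟩ (isPullback_biprod_map_id_snd C p)
  have hdesc : IsDeflation E (biprod.desc f i') :=
    IsDeflation.of_isPullback_s6 ⟨_, _, hj⟩ (isPullback_biprod_fst_desc hv.isPullback f)
  have hfactor : biprod.desc (𝟙 C) j ≫ f = biprod.map (𝟙 C) p ≫ biprod.desc f i' := by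
    ext <;> simp [hp.w]
  have : IsSplitEpi (biprod.desc (𝟙 C) j) := ⟨⟨⟨biprod.inl, by simp⟩⟩⟩
  have hcomp : IsDeflation E (biprod.desc (𝟙 C) j ≫ f) := hfactor ▸ hmap.comp_s6 hdesc
  exact hcomp.conflation_of_isSplitEpi_comp hker

theorem conflation.exists_cokernel_comp {A B C D Z : 𝒜} {i : A ⟶ B} {p : B ⟶ D} {j : B ⟶ C}
    {d : C ⟶ Z} (hi : E.conflation i p) (hj : E.conflation j d) :
    ∃ (P : 𝒜) (f : C ⟶ P) (i' : D ⟶ P) (v : P ⟶ Z), E.conflation (i ≫ j) f ∧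
      E.conflation i' v ∧ j ≫ f = p ≫ i' ∧ f ≫ v = d := by
  obtain ⟨P, f, i', _, _, hp, _⟩ := E.pushout_inflation hj p
  obtain ⟨v, hv, hfv⟩ := hj.exists_of_isPushout hp
  exact ⟨P, f, i', v, hi.comp_of_isPushout hj hp, hv, hp.w, hfv⟩

/-- The opposite exact structure on `𝒜ᵒᵖ`: a conflation of `𝒜` with its two maps reversed and
interchanged. It turns statements about inflations into statements about deflations. -/
def op (E : ExactStructure 𝒜) : ExactStructure 𝒜ᵒᵖ where
  conflation _ _ _ i d := E.conflation d.unop i.unop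
  comp_zero h := Quiver.Hom.unop_inj (E.comp_zero h)
  isKernel h := (E.isCokernel h).map fun hd => CokernelCofork.IsColimit.ofπOp _ _ hd
  isCokernel h := (E.isKernel h).map fun hi => KernelFork.IsLimit.ofιOp _ _ hi
  conflation_iso eX eY eZ _ _ h hi hd := by
    refine E.conflation_iso eZ.unop.symm eY.unop.symm eX.unop.symm h ?_ ?_
    · exact Quiver.Hom.op_inj (by simpa [Iso.inv_comp_eq, Iso.eq_comp_inv] using hd)
    · exact Quiver.Hom.op_inj (by simpa [Iso.inv_comp_eq, Iso.eq_comp_inv] using hi)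
  id_deflation X := conflation_id_zero X.unop (isZero_zero 𝒜ᵒᵖ).unop
  deflation_comp h h' := by
    obtain ⟨P, f, _, _, hf, _⟩ := h'.exists_cokernel_comp h
    exact ⟨.op P, f.op, hf⟩
  pullback_deflation h f := by
    obtain ⟨Y', f', i', Q, q, hp, hq⟩ := E.pushout_inflation h f.unop
    exact ⟨.op Y', f'.op, i'.op, .op Q, q.op, hp.op.flip, hq⟩
  pushout_inflation h f := by
    obtain ⟨Y', f', d', K, k, hp, hk⟩ := E.pullback_deflation h f.unop
    exact ⟨.op Y', f'.op, d'.op, .op K, k.op, hp.op.flip, hk⟩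

section Factorization

variable {A B C : 𝒜} {α : A ⟶ B} {β : B ⟶ C}

theorem conflation_biprod_desc_comp {K Q : 𝒜} {k : K ⟶ B} {q : C ⟶ Q}
    (hk : E.conflation k β) (hq : E.conflation (α ≫ β) q) :
    E.conflation (biprod.desc α k) (β ≫ q) := by
  have hker : IsPullback (biprod.desc α k) (0 : A ⊞ K ⟶ 0) (β ≫ q) 0 := by
    simpa using (isPullback_biprod_fst_desc hk.isPullback α).flip.paste_vert hq.isPullback
  exact IsDeflation.conflation_of_isPullback (E.deflation_comp hk hq) hker

theorem exists_conflation_of_deflation_of_comp_inflation {K Q : 𝒜} {k : K ⟶ B} {q : C ⟶ Q}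
    (hk : E.conflation k β) (hq : E.conflation (α ≫ β) q) :
    ∃ (Q' : 𝒜) (c : B ⟶ Q') (v : Q' ⟶ Q),
      E.conflation α c ∧ E.conflation (k ≫ c) v ∧ c ≫ v = β ≫ q := by
  obtain ⟨Q', c, i, v, hc, hv, hi, hcv⟩ :=
    (conflation_biprod_inl_snd A K).exists_cokernel_comp (conflation_biprod_desc_comp hk hq)
  have hkc : k ≫ c = i := by simpa using biprod.inr ≫= hi
  exact ⟨Q', c, v, by simpa using hc, hkc ▸ hv, hcv⟩

theorem exists_conflation_of_inflation_of_comp_deflation {Q K : 𝒜} {c : B ⟶ Q} {k : K ⟶ A}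
    (hc : E.conflation α c) (hk : E.conflation k (α ≫ β)) :
    ∃ (K' : 𝒜) (k' : K' ⟶ B) (u : K ⟶ K'),
      E.conflation k' β ∧ E.conflation u (k' ≫ c) ∧ u ≫ k' = k ≫ α := by
  obtain ⟨K', k', u, hk', hu, huk⟩ := exists_conflation_of_deflation_of_comp_inflation
    (E := E.op) (α := β.op) (β := α.op) (k := c.op) (q := k.op) hc hk
  exact ⟨K'.unop, k'.unop, u.unop, hk', hu, Quiver.Hom.op_inj huk⟩

end Factorization

end ExactStructure

/-- If `α` is an inflation and `βα` a deflation then `β` is a deflation with an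
admissible exact sequence `0 → Ker βα → Ker β → Coker α → 0`; dually for the
other composite. -/
theorem stmt_6 (E : ExactStructure 𝒜) {A B C : 𝒜} (α : A ⟶ B) (β : B ⟶ C) :
    (∀ {Q K : 𝒜} (c : B ⟶ Q) (k : K ⟶ A),
      E.conflation α c → E.conflation k (α ≫ β) →
      IsDeflation E β ∧ ∃ (K' : 𝒜) (k' : K' ⟶ B) (u : K ⟶ K'),
        E.conflation k' β ∧ E.conflation u (k' ≫ c) ∧ u ≫ k' = k ≫ α) ∧
    (∀ {K Q : 𝒜} (k : K ⟶ B) (q : C ⟶ Q),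
      E.conflation k β → E.conflation (α ≫ β) q →
      IsInflation E α ∧ ∃ (Q' : 𝒜) (c : B ⟶ Q') (v : Q' ⟶ Q),
        E.conflation α c ∧ E.conflation (k ≫ c) v ∧ c ≫ v = β ≫ q) := by
  refine ⟨fun c k hc hk => ?_, fun k q hk hq => ?_⟩
  · obtain ⟨K', k', u, hk', hu, huk⟩ :=
      ExactStructure.exists_conflation_of_inflation_of_comp_deflation hc hk
    exact ⟨⟨K', k', hk'⟩, K', k', u, hk', hu, huk⟩
  · obtain ⟨Q', c, v, hc, hv, hcv⟩ :=
      ExactStructure.exists_conflation_of_deflation_of_comp_inflation hk hq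
    exact ⟨⟨Q', c, hc⟩, Q', c, v, hc, hv, hcv⟩
end

section
/- Let 𝒜 be a weakly idempotent complete exact category, 𝒳 and 𝒴 full additive subcategories of 𝒜 closed under isomorphisms and direct summands, and ω = 𝒳∩𝒴. If Ext¹(X,Y) = 0 for all X∈𝒳 and Y∈𝒴, then TCoFib_ω = CoFib_ω ∩ Weq_ω and TFib_ω = Fib_ω ∩ Weq_ω. -/
open CategoryTheory Limits ZeroObject

universe v u

variable {𝒜 : Type u} [Category.{v} 𝒜] [Preadditive 𝒜] [HasZeroObject 𝒜]
  [HasBinaryBiproducts 𝒜]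

/-!
An inflation with cokernel `Z` lifts against a deflation with kernel `K` whenever `Ext¹(Z, K) = 0`.

Let `(f, t) : A ⊞ W ⟶ B` be a deflation with kernel `K ∈ 𝒴` and `W ∈ ω`. If `f` is an inflation
with cokernel `Z ∈ 𝒳`, a lift in the square from `f` to `(f, t)` with top `inl` and bottom `𝟙 B`
splits `f` and exhibits `Z` as a summand of `W`. If instead `f` is `ω`-epic, then `t` factors as
`h ≫ f`, so that `(f, t)` is the split epimorphism `(𝟙, h)` followed by `f`; weak idempotent
completeness makes `f` a deflation, and its kernel is a summand of `K`.
Conversely, lifting against `0 ⟶ W` for `W ∈ ω` shows that a deflation with kernel in `𝒴` is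
`ω`-epic.
-/

section Pushouts

variable {C : Type u} [Category.{v} C] [HasZeroMorphisms C]

lemma nonempty_isColimit_cokernelCofork_of_isPushout {X Y Z X' Y' : C} {i : X ⟶ Y} {d : Y ⟶ Z}
    {w : i ≫ d = 0} (hd : IsColimit (CokernelCofork.ofπ d w)) {g : X ⟶ X'} {g' : Y ⟶ Y'}
    {i' : X' ⟶ Y'} (sq : IsPushout i g g' i') {d' : Y' ⟶ Z} (w' : i' ≫ d' = 0)
    (hd' : g' ≫ d' = d) : Nonempty (IsColimit (CokernelCofork.ofπ d' w')) := by
  have : Epi d := epi_of_isColimit_cofork hd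
  have : Epi d' := epi_of_epi_fac hd'
  refine ⟨CokernelCofork.IsColimit.ofπ' d' w' fun {T} t ht ↦ ?_⟩
  obtain ⟨l, hl⟩ := CokernelCofork.IsColimit.desc' hd (g' ≫ t) (by rw [sq.w_assoc, ht, comp_zero])
  refine ⟨l, sq.hom_ext ?_ ?_⟩
  · rwa [reassoc_of% hd']
  · rw [reassoc_of% w', zero_comp, ht]

lemma nonempty_isLimit_kernelFork_of_isPullback {X Y Z Y' Z' : C} {i : X ⟶ Y} {d : Y ⟶ Z}
    {w : i ≫ d = 0} (hi : IsLimit (KernelFork.ofι i w)) {g : Z' ⟶ Z} {g' : Y' ⟶ Y}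
    {d' : Y' ⟶ Z'} (sq : IsPullback g' d' d g) {i' : X ⟶ Y'} (w' : i' ≫ d' = 0)
    (hi' : i' ≫ g' = i) : Nonempty (IsLimit (KernelFork.ofι i' w')) := by
  have : Mono i := mono_of_isLimit_fork hi
  have : Mono i' := mono_of_mono_fac hi'
  refine ⟨KernelFork.IsLimit.ofι' i' w' fun {T} t ht ↦ ?_⟩
  obtain ⟨l, hl⟩ := KernelFork.IsLimit.lift' hi (t ≫ g')
    (by rw [Category.assoc, sq.w, reassoc_of% ht, zero_comp])
  refine ⟨l, sq.hom_ext ?_ ?_⟩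
  · rwa [Category.assoc, hi']
  · rw [Category.assoc, w', comp_zero, ht]

lemma isPushout_of_isColimit_cokernelCofork {W K M K' A : C} {s : W ⟶ K} {k : K ⟶ M}
    {π : K ⟶ K'} {p : M ⟶ A} {w : W ⟶ M} {wπ : s ≫ π = 0} {wp : w ≫ p = 0} (hw : s ≫ k = w)
    (hπ : IsColimit (CokernelCofork.ofπ π wπ)) (hp : IsColimit (CokernelCofork.ofπ p wp))
    {j : K' ⟶ A} (hj : k ≫ p = π ≫ j) : IsPushout k π p j := by
  have : Epi π := epi_of_isColimit_cofork hπ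
  have : Epi p := epi_of_isColimit_cofork hp
  have hdesc {T : C} (a : M ⟶ T) (b : K' ⟶ T) (hab : k ≫ a = π ≫ b) :
      { l : A ⟶ T // p ≫ l = a } :=
    CokernelCofork.IsColimit.desc' hp a (by
      rw [← hw, Category.assoc, hab, reassoc_of% wπ, zero_comp])
  refine ⟨⟨hj⟩, ⟨PushoutCocone.IsColimit.mk hj
    (fun c ↦ (hdesc c.inl c.inr c.condition).1) (fun c ↦ (hdesc _ _ c.condition).2)
    (fun c ↦ ?_) (fun c m hm _ ↦ ?_)⟩⟩
  · rw [← cancel_epi π, ← reassoc_of% hj, (hdesc _ _ c.condition).2, c.condition]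
  · rw [← cancel_epi p, hm, (hdesc _ _ c.condition).2]

end Pushouts

namespace ExactStructure

variable {E : ExactStructure 𝒜}

namespace conflation

section

variable {X Y Z : 𝒜} {i : X ⟶ Y} {d : Y ⟶ Z}

lemma of_isColimit (h : E.conflation i d) {Z' : 𝒜} {d' : Y ⟶ Z'} {w : i ≫ d' = 0}
    (hd' : IsColimit (CokernelCofork.ofπ d' w)) : E.conflation i d' :=
  E.conflation_iso (Iso.refl X) (Iso.refl Y)
    ((E.isCokernel h).some.coconePointUniqueUpToIso hd') h (by simp)
    (((E.isCokernel h).some.comp_coconePointUniqueUpToIso_hom hd' .one).trans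
      (Category.id_comp d').symm)

lemma of_isLimit (h : E.conflation i d) {X' : 𝒜} {i' : X' ⟶ Y} {w : i' ≫ d = 0}
    (hi' : IsLimit (KernelFork.ofι i' w)) : E.conflation i' d :=
  E.conflation_iso ((E.isKernel h).some.conePointUniqueUpToIso hi') (Iso.refl Y)
    (Iso.refl Z) h
    ((Category.comp_id i).trans
      ((E.isKernel h).some.conePointUniqueUpToIso_hom_comp hi' .zero).symm) (by simp)

lemma of_isPushout_s8 (h : E.conflation i d) {X' Y' : 𝒜} {g : X ⟶ X'} {g' : Y ⟶ Y'}
    {i' : X' ⟶ Y'} (sq : IsPushout i g g' i') {d' : Y' ⟶ Z} (w : i' ≫ d' = 0)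
    (hd' : g' ≫ d' = d) : E.conflation i' d' := by
  obtain ⟨Y'', f, i'', Q, q, sq', hq⟩ := E.pushout_inflation h g
  obtain ⟨hcoker⟩ := nonempty_isColimit_cokernelCofork_of_isPushout (E.isCokernel h).some sq w hd'
  have hi' : E.conflation i' ((sq'.isoIsPushout _ _ sq).inv ≫ q) :=
    E.conflation_iso (Iso.refl X') (sq'.isoIsPushout _ _ sq) (Iso.refl Q) hq (by simp) (by simp)
  exact hi'.of_isColimit hcoker

lemma of_isPullback_s8 (h : E.conflation i d) {Y' Z' : 𝒜} {g : Z' ⟶ Z} {g' : Y' ⟶ Y}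
    {d' : Y' ⟶ Z'} (sq : IsPullback g' d' d g) {i' : X ⟶ Y'} (w : i' ≫ d' = 0)
    (hi' : i' ≫ g' = i) : E.conflation i' d' := by
  obtain ⟨Y'', f, d'', K, k, sq', hk⟩ := E.pullback_deflation h g
  obtain ⟨hker⟩ := nonempty_isLimit_kernelFork_of_isPullback (E.isKernel h).some sq w hi'
  have hd' : E.conflation (k ≫ (sq'.isoIsPullback _ _ sq).hom) d' :=
    E.conflation_iso (Iso.refl K) (sq'.isoIsPullback _ _ sq) (Iso.refl Z') hk (by simp) (by simp)
  exact hd'.of_isLimit hker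

lemma exists_splitting_of_retraction (h : E.conflation i d) {r : Y ⟶ X} (hr : i ≫ r = 𝟙 X) :
    ∃ σ : (ShortComplex.mk i d (E.comp_zero h)).Splitting, σ.r = r := by
  have := h.epi
  obtain ⟨s, hs⟩ := h.exists_desc (𝟙 Y - r ≫ i) (by simp [reassoc_of% hr])
  have hsd : s ≫ d = 𝟙 Z := by
    rw [← cancel_epi d, reassoc_of% hs]
    simp [E.comp_zero h]
  exact ⟨{ r := r, s := s, f_r := hr, s_g := hsd, id := by simp [hs] }, rfl⟩

lemma exists_splitting_of_section (h : E.conflation i d) {s : Z ⟶ Y} (hs : s ≫ d = 𝟙 Z) :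
    ∃ σ : (ShortComplex.mk i d (E.comp_zero h)).Splitting, σ.s = s := by
  have := h.mono
  obtain ⟨r, hr⟩ := h.exists_lift (𝟙 Y - d ≫ s) (by simp [hs])
  have hir : i ≫ r = 𝟙 X := by
    rw [← cancel_mono i, Category.assoc, hr]
    simp [reassoc_of% E.comp_zero h]
  exact ⟨{ r := r, s := s, f_r := hir, s_g := hs, id := by simp [hr] }, rfl⟩

end

section Ext

lemma exists_extension {X Y Z T : 𝒜} {i : X ⟶ Y} {d : Y ⟶ Z} (h : E.conflation i d)
    (hExt : Ext1IsZero E Z T) (g : X ⟶ T) : ∃ g' : Y ⟶ T, i ≫ g' = g := by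
  obtain ⟨P, f, i', -, -, sq, -⟩ := E.pushout_inflation h g
  have w : i ≫ d = g ≫ (0 : T ⟶ Z) := by rw [E.comp_zero h, Limits.comp_zero]
  have hpush : E.conflation i' (sq.desc d 0 w) := h.of_isPushout_s8 sq (by simp) (by simp)
  obtain ⟨r, hr⟩ := hExt _ _ hpush
  exact ⟨f ≫ r, by rw [sq.w_assoc, hr, Category.comp_id]⟩

/- The kernel `L` of `p ≫ d` is `K ⊕ A`, split off by `a`. Extending the projection `L ⟶ K` to `P`
gives a retraction of `k` that vanishes on `A`, and the corresponding section of `p` extends `a`. -/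
lemma exists_section_extending {A B Z K P : 𝒜} {i : A ⟶ B} {d : B ⟶ Z} {k : K ⟶ P} {p : P ⟶ B}
    (hi : E.conflation i d) (hp : E.conflation k p) (hExt : Ext1IsZero E Z K)
    (a : A ⟶ P) (ha : a ≫ p = i) : ∃ s : B ⟶ P, s ≫ p = 𝟙 B ∧ i ≫ s = a := by
  have := hi.mono
  have := hp.mono
  obtain ⟨L, l, hl⟩ := E.deflation_comp hp hi
  obtain ⟨m, hm⟩ := hi.exists_lift (l ≫ p) (by rw [Category.assoc, E.comp_zero hl])
  obtain ⟨ρ, hρ⟩ := hp.exists_lift (l - m ≫ a) (by simp [ha, hm])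
  obtain ⟨R, hR⟩ := hl.exists_extension hExt ρ
  have hkR : k ≫ R = 𝟙 K := by
    obtain ⟨e, he⟩ := hl.exists_lift k (by rw [reassoc_of% E.comp_zero hp, zero_comp])
    have hem : e ≫ m = 0 := by
      rw [← cancel_mono i, Category.assoc, hm, reassoc_of% he, E.comp_zero hp, zero_comp]
    have hkR' : k ≫ R = e ≫ ρ := by rw [← hR, reassoc_of% he]
    rw [← cancel_mono k, hkR', Category.assoc, hρ]
    simp [he, reassoc_of% hem]
  have haR : a ≫ R = 0 := by
    obtain ⟨a', ha'⟩ := hl.exists_lift a (by rw [reassoc_of% ha, E.comp_zero hi])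
    have ham : a' ≫ m = 𝟙 A := by
      rw [← cancel_mono i, Category.assoc, hm, reassoc_of% ha', ha, Category.id_comp]
    have haR' : a ≫ R = a' ≫ ρ := by rw [← hR, reassoc_of% ha']
    rw [← cancel_mono k, haR', Category.assoc, hρ]
    simp [ha', reassoc_of% ham]
  obtain ⟨σ, rfl⟩ := hp.exists_splitting_of_retraction hkR
  refine ⟨σ.s, σ.s_g, ?_⟩
  rw [← ha, Category.assoc, σ.g_s]
  simp [reassoc_of% haR]

lemma hasLiftingProperty {A B Z K P Q : 𝒜} {i : A ⟶ B} {d : B ⟶ Z} {k : K ⟶ P} {p : P ⟶ Q}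
    (hi : E.conflation i d) (hp : E.conflation k p) (hExt : Ext1IsZero E Z K) :
    HasLiftingProperty i p where
  sq_hasLift {a b} sq := by
    obtain ⟨P', b', p', -, -, pb, -⟩ := E.pullback_deflation hp b
    have w : k ≫ p = (0 : K ⟶ B) ≫ b := by rw [E.comp_zero hp, zero_comp]
    have hp' : E.conflation (pb.lift k 0 w) p' := hp.of_isPullback_s8 pb (by simp) (by simp)
    obtain ⟨s, hsp, his⟩ := hi.exists_section_extending hp' hExt (pb.lift a i sq.w) (by simp)
    exact ⟨⟨{ l := s ≫ b'
              fac_left := by simp [reassoc_of% his]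
              fac_right := by simp [pb.w, reassoc_of% hsp] }⟩⟩

end Ext

lemma nonempty_retract_of_isSplitEpi_comp {M A B K K' : 𝒜} {p : M ⟶ A} [IsSplitEpi p] {f : A ⟶ B}
    {k : K ⟶ M} {j : K' ⟶ A} (hpf : E.conflation k (p ≫ f)) (hf : E.conflation j f) :
    Nonempty (Retract K' K) := by
  have := hf.mono
  obtain ⟨ι, hι⟩ := hpf.exists_lift (j ≫ section_ p) (by simp [E.comp_zero hf])
  obtain ⟨π, hπ⟩ := hf.exists_lift (k ≫ p) (by rw [Category.assoc, E.comp_zero hpf])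
  exact ⟨{ i := ι
           r := π
           retract := by rw [← cancel_mono j, Category.assoc, hπ, reassoc_of% hι]; simp }⟩

end conflation

lemma conflation_zero_iso (E : ExactStructure 𝒜) {X Y : 𝒜} (e : X ≅ Y) :
    E.conflation (0 : (0 : 𝒜) ⟶ X) e.hom :=
  E.conflation_iso (Iso.refl 0) e.symm (Iso.refl Y) (E.id_deflation Y) (by simp) (by simp)

end ExactStructure

variable {E : ExactStructure 𝒜}

/- If `W` is the kernel of `p`, it is also a summand of the kernel `K` of `p ≫ f`. Dividing `W` out
of both `K` and `M` is a pushout of inflations, which turns `K ⟶ M ⟶ B` into `K' ⟶ A ⟶ B`. -/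
lemma IsWIC.isDeflation_of_isSplitEpi_comp (hwic : IsWIC E) {M A B : 𝒜} (p : M ⟶ A) [IsSplitEpi p]
    {f : A ⟶ B} (hpf : IsDeflation E (p ≫ f)) : IsDeflation E f := by
  obtain ⟨K, k, hk⟩ := hpf
  obtain ⟨W, w, hw⟩ := hwic p (section_ p) (IsSplitEpi.id p)
  obtain ⟨σ, -⟩ := hw.exists_splitting_of_section (IsSplitEpi.id p)
  obtain ⟨s, hsw⟩ := hk.exists_lift w (by rw [reassoc_of% E.comp_zero hw, zero_comp])
  have hs : s ≫ k ≫ σ.r = 𝟙 W := by rw [reassoc_of% hsw]; exact σ.f_r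
  obtain ⟨K', κ, hκ⟩ := hwic (k ≫ σ.r) s hs
  obtain ⟨τ, rfl⟩ := hκ.exists_splitting_of_section hs
  have hπ : IsColimit (CokernelCofork.ofπ τ.r τ.s_r) :=
    ShortComplex.Splitting.gIsCokernel (S := .mk τ.s τ.r τ.s_r)
      { r := k ≫ σ.r, s := κ, f_r := hs, s_g := τ.f_r, id := (add_comm _ _).trans τ.id }
  obtain ⟨j, hj⟩ := CokernelCofork.IsColimit.desc' hπ (k ≫ p)
    (by rw [reassoc_of% hsw]; exact E.comp_zero hw)
  change τ.r ≫ j = k ≫ p at hj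
  have hjf : j ≫ f = 0 := by
    have : Epi τ.r := epi_of_isColimit_cofork hπ
    rw [← cancel_epi τ.r, reassoc_of% hj, E.comp_zero hk, comp_zero]
  exact ⟨K', j, hk.of_isPushout_s8
    (isPushout_of_isColimit_cokernelCofork hsw hπ (E.isCokernel hw).some hj.symm) hjf rfl⟩

section Classes

variable {𝒳 𝒴 ω : Set 𝒜} {A B : 𝒜} {f : A ⟶ B}

lemma WeqO.of_tCoFibO (h0 : 0 ∈ 𝒴) (hf : TCoFibO E ω f) : WeqO E ω 𝒴 f := by
  obtain ⟨⟨r, hr⟩, Z, d, hd, hZ⟩ := hf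
  obtain ⟨σ, -⟩ := hd.exists_splitting_of_retraction hr
  exact ⟨Z, hZ, σ.s, 0, 0, E.conflation_zero_iso σ.isoBinaryBiproduct.symm, h0⟩

lemma WeqO.of_tFibO (h0 : 0 ∈ ω) (hf : TFibO E 𝒴 f) : WeqO E ω 𝒴 f := by
  obtain ⟨K, k, hk, hK⟩ := hf
  exact ⟨0, h0, 0, K, k ≫ biprod.inl, E.conflation_iso (Iso.refl K) (isoBiprodZero (isZero_zero 𝒜))
    (Iso.refl B) hk (by simp) (by simp), hK⟩

lemma FibO.of_tFibO (hext : ∀ W ∈ ω, ∀ K ∈ 𝒴, Ext1IsZero E W K) (hf : TFibO E 𝒴 f) :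
    FibO ω f := by
  obtain ⟨K, k, hk, hK⟩ := hf
  intro W hW g
  have := (E.id_deflation W).hasLiftingProperty hk (hext W hW K hK)
  have sq : CommSq (0 : 0 ⟶ A) (0 : 0 ⟶ W) f g := ⟨by simp⟩
  exact ⟨sq.lift, sq.fac_right⟩

lemma TCoFibO.of_coFibO_of_weqO (hY : ∀ ⦃A B : 𝒜⦄, Retract A B → B ∈ 𝒴 → A ∈ 𝒴)
    (hext : ∀ Z ∈ 𝒳, ∀ K ∈ 𝒴, Ext1IsZero E Z K) (hcof : CoFibO E 𝒳 f)
    (hweq : WeqO E (𝒳 ∩ 𝒴) 𝒴 f) : TCoFibO E (𝒳 ∩ 𝒴) f := by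
  obtain ⟨Z, d, hd, hZ⟩ := hcof
  obtain ⟨W, hW, t, K, k, hk, hK⟩ := hweq
  have := hd.epi
  have := hd.hasLiftingProperty hk (hext Z hZ K hK)
  have sq : CommSq biprod.inl f (biprod.desc f t) (𝟙 B) := ⟨by simp⟩
  obtain ⟨ι, hι⟩ := hd.exists_desc (sq.lift ≫ biprod.snd) (by simp)
  have hsplit : ι ≫ t ≫ d = 𝟙 Z := by
    have hfd : biprod.desc f t ≫ d = biprod.snd ≫ t ≫ d := by
      ext <;> simp [E.comp_zero hd]
    rw [← cancel_epi d, reassoc_of% hι, ← hfd, sq.fac_right_assoc, Category.id_comp,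
      Category.comp_id]
  exact ⟨⟨sq.lift ≫ biprod.fst, by simp⟩, Z, d, hd, hZ, hY ⟨ι, t ≫ d, hsplit⟩ hW.2⟩

lemma TFibO.of_fibO_of_weqO (hwic : IsWIC E) (hY : ∀ ⦃A B : 𝒜⦄, Retract A B → B ∈ 𝒴 → A ∈ 𝒴)
    (hfib : FibO ω f) (hweq : WeqO E ω 𝒴 f) : TFibO E 𝒴 f := by
  obtain ⟨W, hW, t, K, k, hk, hK⟩ := hweq
  obtain ⟨h, rfl⟩ := hfib W hW t
  have hfac : biprod.desc f (h ≫ f) = biprod.desc (𝟙 A) h ≫ f := by ext <;> simp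
  have : IsSplitEpi (biprod.desc (𝟙 A) h) := ⟨⟨biprod.inl, by simp⟩⟩
  rw [hfac] at hk
  obtain ⟨K', j, hj⟩ := hwic.isDeflation_of_isSplitEpi_comp _ ⟨K, k, hk⟩
  obtain ⟨hretract⟩ := hk.nonempty_retract_of_isSplitEpi_comp hj
  exact ⟨K', j, hj, hY hretract hK⟩

lemma tCoFibO_iff (hY : ∀ ⦃A B : 𝒜⦄, Retract A B → B ∈ 𝒴 → A ∈ 𝒴)
    (hext : ∀ Z ∈ 𝒳, ∀ K ∈ 𝒴, Ext1IsZero E Z K) :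
    TCoFibO E (𝒳 ∩ 𝒴) f ↔ CoFibO E 𝒳 f ∧ WeqO E (𝒳 ∩ 𝒴) 𝒴 f := by
  refine ⟨fun hf ↦ ?_, fun hf ↦ .of_coFibO_of_weqO hY hext hf.1 hf.2⟩
  obtain ⟨-, Z, d, hd, hZ⟩ := id hf
  exact ⟨⟨Z, d, hd, hZ.1⟩, .of_tCoFibO (hY ⟨0, 0, by simp⟩ hZ.2) hf⟩

lemma tFibO_iff (hwic : IsWIC E) (h0 : 0 ∈ ω)
    (hY : ∀ ⦃A B : 𝒜⦄, Retract A B → B ∈ 𝒴 → A ∈ 𝒴)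
    (hext : ∀ W ∈ ω, ∀ K ∈ 𝒴, Ext1IsZero E W K) :
    TFibO E 𝒴 f ↔ FibO ω f ∧ WeqO E ω 𝒴 f :=
  ⟨fun hf ↦ ⟨.of_tFibO hext hf, .of_tFibO h0 hf⟩, fun hf ↦ .of_fibO_of_weqO hwic hY hf.1 hf.2⟩

end Classes

theorem stmt_8_general (hwic : IsWIC E) {𝒳 𝒴 : Set 𝒜} (h0 : 0 ∈ 𝒳 ∩ 𝒴)
    (hY : ∀ ⦃A B : 𝒜⦄, Retract A B → B ∈ 𝒴 → A ∈ 𝒴)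
    (hext : ∀ Z ∈ 𝒳, ∀ K ∈ 𝒴, Ext1IsZero E Z K) :
    (∀ {A B : 𝒜} (f : A ⟶ B),
      TCoFibO E (𝒳 ∩ 𝒴) f ↔ CoFibO E 𝒳 f ∧ WeqO E (𝒳 ∩ 𝒴) 𝒴 f) ∧
    (∀ {A B : 𝒜} (f : A ⟶ B),
      TFibO E 𝒴 f ↔ FibO (𝒳 ∩ 𝒴) f ∧ WeqO E (𝒳 ∩ 𝒴) 𝒴 f) :=
  ⟨fun _ ↦ tCoFibO_iff hY hext, fun _ ↦ tFibO_iff hwic h0 hY fun W hW ↦ hext W hW.1⟩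

/-- If `Ext¹(𝒳,𝒴) = 0` then `TCoFib_ω = CoFib_ω ∩ Weq_ω` and
`TFib_ω = Fib_ω ∩ Weq_ω`. -/
theorem stmt_8 (E : ExactStructure 𝒜) (hwic : IsWIC E) (X Y : Set 𝒜)
    (hX : AdditivelyClosed X) (hY : AdditivelyClosed Y)
    (hext : ∀ A ∈ X, ∀ B ∈ Y, Ext1IsZero E A B) :
    (∀ {A B : 𝒜} (f : A ⟶ B),
      TCoFibO E (X ∩ Y) f ↔ (CoFibO E X f ∧ WeqO E (X ∩ Y) Y f)) ∧
    (∀ {A B : 𝒜} (f : A ⟶ B),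
      TFibO E Y f ↔ (FibO (X ∩ Y) f ∧ WeqO E (X ∩ Y) Y f)) :=
  stmt_8_general hwic ⟨hX.1, hY.1⟩ (fun _ _ h ↦ hY.2.2.2 h.i h.r h.retract) hext
end
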